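/- For every integer n ≥ 5000, -(log p(n) + log p(n-2) - 2·log p(n-1)) < 24π/(24n)^{3/2} - (24π/(24n)^{3/2})². -/

import Mathlib

open Real

/-- The partition function, as a real number. -/
noncomputable def p (n : ℕ) : ℝ := (Fintype.card (Nat.Partition n) : ℝ)

/-!
Let `F q = ∑ p n * q ^ n`. Cauchy's formula reads `2 π p n = ∫ F (e ^ (-z)) e ^ (n z)` over the
segment `z = r + i θ`, `|θ| ≤ π`. With `N = n - 1 / 24` and the saddle point `r = π / √(6 N)`, the
modular transformation of the Dedekind eta function replaces `F` by an elementary function on the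
arc `|θ| ≤ √3 r`, while the rest of the circle contributes a relative error `e ^ (-c / r)`. Bending
the segment onto the circle `|z| = r` turns the remaining integral into a Bessel integral, which is
a Gaussian integral up to a further exponentially small error. The outcome is the leading term of
the Hardy–Ramanujan–Rademacher formula, `log (p n) ≈ μ - log N + log (1 - 1 / μ)` up to a
constant, with `μ = π √(2 N / 3)`.

The second difference of `μ` is `-24 π / (24 n) ^ (3 / 2)` up to `O(n ^ (-5 / 2))`, and that of
`-log N` is about `1 / n ^ 2`. The square of the main term is only of order `n ^ (-3)`, so the
`1 / n ^ 2` coming from `log N` leaves room for it and for all the errors.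
-/

open Filter Finset MeasureTheory Topology
open Complex (I)

section PowerSeries

open PowerSeries PowerSeries.WithPiTopology

variable {𝕜 : Type*} [RCLike 𝕜]

lemma hasSum_coeff_mul_mul_pow {f g : PowerSeries 𝕜} {q a b : 𝕜}
    (hf : HasSum (fun n ↦ coeff n f * q ^ n) a) (hg : HasSum (fun n ↦ coeff n g * q ^ n) b) :
    HasSum (fun n ↦ coeff n (f * g) * q ^ n) (a * b) := by
  have hcoeff (n : ℕ) : coeff n (f * g) * q ^ n =
      ∑ x ∈ antidiagonal n, (coeff x.1 f * q ^ x.1) * (coeff x.2 g * q ^ x.2) := by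
    rw [coeff_mul, sum_mul]
    refine sum_congr rfl fun x hx ↦ ?_
    rw [← mem_antidiagonal.1 hx, pow_add]
    ring
  have hf' := hf.summable.norm
  have hg' := hg.summable.norm
  simp_rw [hcoeff]
  rw [← hf.tsum_eq, ← hg.tsum_eq, tsum_mul_tsum_eq_tsum_sum_antidiagonal_of_summable_norm hf' hg']
  exact (summable_norm_sum_mul_antidiagonal_of_summable_norm hf' hg').of_norm.hasSum

lemma hasSum_coeff_prod_mul_pow {ι : Type*} (s : Finset ι) {f : ι → PowerSeries 𝕜} {q : 𝕜}
    {a : ι → 𝕜} (h : ∀ i ∈ s, HasSum (fun n ↦ coeff n (f i) * q ^ n) (a i)) :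
    HasSum (fun n ↦ coeff n (∏ i ∈ s, f i) * q ^ n) (∏ i ∈ s, a i) := by
  induction s using Finset.cons_induction with
  | empty =>
    have hone := hasSum_single (f := fun n ↦ coeff n (1 : PowerSeries 𝕜) * q ^ n) 0
      fun n hn ↦ by rw [coeff_one, if_neg hn, zero_mul]
    rwa [pow_zero, coeff_zero_one, mul_one] at hone
  | cons i s hi ih =>
    rw [prod_cons, prod_cons]
    exact hasSum_coeff_mul_mul_pow (h i (mem_cons_self i s))
      (ih fun j hj ↦ h j (mem_cons_of_mem hj))

lemma coeff_tsum_X_pow_mul {R : Type*} [CommRing R] [TopologicalSpace R] [IsTopologicalRing R]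
    [T2Space R] {d : ℕ} (hd : d ≠ 0) (n : ℕ) :
    coeff n (∑' j : ℕ, (X : PowerSeries R) ^ (d * j)) = if d ∣ n then 1 else 0 := by
  have hsum : Summable fun j : ℕ ↦ (X : PowerSeries R) ^ (d * j) := by
    simp_rw [pow_mul]
    exact summable_pow_of_constantCoeff_eq_zero (by simp [hd])
  rw [hsum.map_tsum _ (continuous_coeff R n)]
  simp only [coeff_X_pow]
  split_ifs with h
  · obtain ⟨k, rfl⟩ := h
    rw [tsum_eq_single k fun j hj ↦ by simp [hd, hj.symm]]
    simp
  · exact (tsum_congr fun j ↦ if_neg fun hj ↦ h ⟨j, hj⟩).trans tsum_zero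

lemma mk_card_restricted_le_eq_prod (K : ℕ) :
    PowerSeries.mk (fun n ↦ (#(Nat.Partition.restricted n (· ≤ K)) : ℂ)) =
      ∏ i ∈ range K, PowerSeries.mk (fun n ↦ if i + 1 ∣ n then (1 : ℂ) else 0) := by
  let _ : TopologicalSpace ℂ := ⊥
  have : DiscreteTopology ℂ := ⟨rfl⟩
  have hmk := Nat.Partition.hasProd_powerSeriesMk_card_restricted ℂ (· ≤ K)
  have hprod := hasProd_prod_of_ne_finset_one (s := range K) (L := .unconditional ℕ)
    (f := fun i ↦ if i + 1 ≤ K then ∑' j : ℕ, (X : PowerSeries ℂ) ^ ((i + 1) * j) else 1)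
    (fun i hi ↦ if_neg (by simpa using hi))
  refine (hmk.unique hprod).trans (prod_congr rfl fun i hi ↦ ?_)
  rw [if_pos (Nat.succ_le_of_lt (mem_range.1 hi))]
  ext n
  rw [coeff_tsum_X_pow_mul i.succ_ne_zero, coeff_mk]

end PowerSeries

section GeneratingFunction

variable {q : ℂ}

lemma one_sub_pow_ne_zero {k : ℕ} (hq : ‖q‖ < 1) (hk : k ≠ 0) : 1 - q ^ k ≠ 0 := by
  have hqk : ‖q ^ k‖ < 1 := norm_pow q k ▸ pow_lt_one₀ (norm_nonneg q) hq hk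
  exact sub_ne_zero.2 fun h ↦ by simp [← h] at hqk

lemma hasSum_ite_dvd_mul_pow {d : ℕ} (hd : d ≠ 0) (hq : ‖q‖ < 1) :
    HasSum (fun n ↦ (if d ∣ n then (1 : ℂ) else 0) * q ^ n) (1 - q ^ d)⁻¹ := by
  have hqd : ‖q ^ d‖ < 1 := norm_pow q d ▸ pow_lt_one₀ (norm_nonneg q) hq hd
  have hinj : Function.Injective (d * ·) := mul_right_injective₀ hd
  rw [← hinj.hasSum_iff fun n hn ↦ by
    rw [if_neg fun ⟨k, hk⟩ ↦ hn ⟨k, hk.symm⟩, zero_mul]]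
  exact (hasSum_geometric_of_norm_lt_one hqd).congr_fun fun j ↦ by simp [pow_mul]

lemma hasSum_card_restricted_mul_pow (K : ℕ) (hq : ‖q‖ < 1) :
    HasSum (fun n ↦ (#(Nat.Partition.restricted n (· ≤ K)) : ℂ) * q ^ n)
      (∏ i ∈ range K, (1 - q ^ (i + 1))⁻¹) := by
  have h := hasSum_coeff_prod_mul_pow (range K)
    (f := fun i ↦ PowerSeries.mk fun n ↦ if i + 1 ∣ n then (1 : ℂ) else 0) (q := q)
    (a := fun i ↦ (1 - q ^ (i + 1))⁻¹)
    fun i _ ↦ by simpa only [PowerSeries.coeff_mk] using hasSum_ite_dvd_mul_pow i.succ_ne_zero hq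
  simpa only [← mk_card_restricted_le_eq_prod, PowerSeries.coeff_mk] using h

lemma card_restricted_le_eq_card {K n : ℕ} (h : n ≤ K) :
    #(Nat.Partition.restricted n (· ≤ K)) = Fintype.card (Nat.Partition n) := by
  rw [Nat.Partition.restricted, filter_true_of_mem, card_univ]
  exact fun x _ i hi ↦ (Nat.Partition.le_of_mem_parts hi).trans h

lemma tprod_one_sub_pow_ne_zero (hq : ‖q‖ < 1) : ∏' n : ℕ, (1 - q ^ (n + 1)) ≠ 0 := by
  simp only [sub_eq_add_neg]
  refine tprod_one_add_ne_zero_of_summable (f := fun n ↦ -q ^ (n + 1)) (fun n ↦ ?_) ?_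
  · simpa only [sub_eq_add_neg] using one_sub_pow_ne_zero hq n.succ_ne_zero
  · simpa using (summable_nat_add_iff 1).mpr (summable_geometric_of_lt_one (norm_nonneg q) hq)

lemma tendsto_prod_inv_one_sub_pow (hq : ‖q‖ < 1) :
    Tendsto (fun K ↦ ∏ i ∈ range K, (1 - q ^ (i + 1))⁻¹) atTop
      (𝓝 (∏' n : ℕ, (1 - q ^ (n + 1)))⁻¹) := by
  simp_rw [prod_inv_distrib]
  exact (ModularForm.multipliable_one_sub_pow hq).hasProd.tendsto_prod_nat.inv₀
    (tprod_one_sub_pow_ne_zero hq)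

lemma p_nonneg (n : ℕ) : 0 ≤ p n := Nat.cast_nonneg _

lemma norm_p_mul_pow (n : ℕ) (q : ℂ) : ‖(p n : ℂ) * q ^ n‖ = p n * ‖q‖ ^ n := by
  rw [norm_mul, norm_pow, Complex.norm_of_nonneg (p_nonneg n)]

lemma summable_p_mul_pow {ρ : ℝ} (h0 : 0 ≤ ρ) (h1 : ρ < 1) : Summable fun n ↦ p n * ρ ^ n := by
  have hq : ‖(ρ : ℂ)‖ < 1 := by rwa [Complex.norm_of_nonneg h0]
  obtain ⟨C, hC⟩ := (tendsto_prod_inv_one_sub_pow hq).norm.bddAbove_range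
  refine summable_of_sum_range_le (c := C)
    (fun n ↦ mul_nonneg (p_nonneg n) (pow_nonneg h0 n)) fun K ↦ ?_
  have hK : HasSum (fun n ↦ (#(Nat.Partition.restricted n (· ≤ K)) : ℝ) * ρ ^ n)
      (∏ i ∈ range K, (1 - ρ ^ (i + 1))⁻¹) := by
    rw [← Complex.hasSum_ofReal]
    exact mod_cast hasSum_card_restricted_mul_pow K hq
  calc ∑ n ∈ range K, p n * ρ ^ n
      = ∑ n ∈ range K, (#(Nat.Partition.restricted n (· ≤ K)) : ℝ) * ρ ^ n :=
        sum_congr rfl fun n hn ↦ by rw [card_restricted_le_eq_card (mem_range.1 hn).le, p]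
    _ ≤ ∏ i ∈ range K, (1 - ρ ^ (i + 1))⁻¹ := sum_le_hasSum _ (fun n _ ↦ by positivity) hK
    _ ≤ ‖∏ i ∈ range K, (1 - (ρ : ℂ) ^ (i + 1))⁻¹‖ := by
        refine (le_abs_self _).trans_eq ?_
        rw [← Real.norm_eq_abs, ← Complex.norm_real]
        push_cast
        rfl
    _ ≤ C := hC ⟨K, rfl⟩

/-- The generating function `∑ p(n) qⁿ` of the partition function, meaningful for `‖q‖ < 1`. -/
noncomputable def partitionGF (q : ℂ) : ℂ := ∑' n, (p n : ℂ) * q ^ n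

lemma hasSum_partitionGF (hq : ‖q‖ < 1) :
    HasSum (fun n ↦ (p n : ℂ) * q ^ n) (partitionGF q) :=
  (Summable.of_norm_bounded (summable_p_mul_pow (norm_nonneg q) hq)
    fun n ↦ (norm_p_mul_pow n q).le).hasSum

lemma partitionGF_eq_inv_tprod (hq : ‖q‖ < 1) :
    partitionGF q = (∏' n : ℕ, (1 - q ^ (n + 1)))⁻¹ := by
  have h := tendsto_tsum_of_dominated_convergence (𝓕 := atTop)
    (f := fun K n ↦ (#(Nat.Partition.restricted n (· ≤ K)) : ℂ) * q ^ n)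
    (g := fun n ↦ (p n : ℂ) * q ^ n) (summable_p_mul_pow (norm_nonneg q) hq)
    (fun n ↦ tendsto_const_nhds.congr' <| by
      filter_upwards [eventually_ge_atTop n] with K hK
      simp [p, card_restricted_le_eq_card hK])
    (.of_forall fun K n ↦ by
      simp only [norm_mul, norm_pow, Complex.norm_natCast, p]
      gcongr
      exact card_le_univ _)
  simp_rw [fun K ↦ (hasSum_card_restricted_mul_pow K hq).tsum_eq] at h
  exact tendsto_nhds_unique h (tendsto_prod_inv_one_sub_pow hq)

lemma partitionGF_ne_zero (hq : ‖q‖ < 1) : partitionGF q ≠ 0 := by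
  rw [partitionGF_eq_inv_tprod hq]
  exact inv_ne_zero (tprod_one_sub_pow_ne_zero hq)

lemma p_le_two_pow (n : ℕ) : p n ≤ 2 ^ n := by
  have hcard := Fintype.card_le_of_surjective _ (Nat.Partition.ofComposition_surj (n := n))
  rw [composition_card] at hcard
  rw [p]
  exact_mod_cast hcard.trans (Nat.pow_le_pow_right two_pos n.pred_le)

lemma norm_partitionGF_sub_one_le (hq : ‖q‖ ≤ 1 / 4) : ‖partitionGF q - 1‖ ≤ 4 * ‖q‖ := by
  have htail : HasSum (fun n ↦ (p (n + 1) : ℂ) * q ^ (n + 1)) (partitionGF q - 1) := by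
    simpa [p] using (hasSum_nat_add_iff' 1).2 (hasSum_partitionGF (hq.trans_lt (by norm_num)))
  have hgeom : HasSum (fun n : ℕ ↦ 2 * ‖q‖ * (1 / 2) ^ n) (2 * ‖q‖ * 2) :=
    hasSum_geometric_two.mul_left _
  refine (htail.norm_le_of_bounded hgeom fun n ↦ ?_).trans_eq (by ring)
  calc ‖(p (n + 1) : ℂ) * q ^ (n + 1)‖ ≤ 2 ^ (n + 1) * ‖q‖ ^ (n + 1) := by
        rw [norm_p_mul_pow]
        gcongr
        exact p_le_two_pow _
    _ = 2 * ‖q‖ * (2 * ‖q‖) ^ n := by ring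
    _ ≤ 2 * ‖q‖ * (1 / 2) ^ n := by
        gcongr
        linarith

end GeneratingFunction

section ComplexSqrt

lemma norm_csqrt (z : ℂ) : ‖Complex.sqrt z‖ = √‖z‖ := by
  rcases eq_or_ne z 0 with rfl | hz
  · simp
  · rw [sqrt_eq_exp hz, Complex.norm_exp, Complex.div_ofNat_re, Complex.log_re, exp_half,
      exp_log (norm_pos_iff.2 hz)]

lemma csqrt_exp {w : ℂ} (h₁ : -π < w.im) (h₂ : w.im ≤ π) :
    Complex.sqrt (Complex.exp w) = Complex.exp (w / 2) := by
  rw [sqrt_eq_exp (Complex.exp_ne_zero w), Complex.log_exp h₁ h₂]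

lemma csqrt_ofReal {x : ℝ} (hx : 0 ≤ x) : Complex.sqrt x = √x :=
  Complex.sqrt_of_nonneg (Complex.zero_le_real.2 hx)

lemma csqrt_mul {z w : ℂ} (hz : z ≠ 0) (hw : w ≠ 0) (h : z.arg + w.arg ∈ Set.Ioc (-π) π) :
    Complex.sqrt (z * w) = Complex.sqrt z * Complex.sqrt w := by
  rw [sqrt_eq_exp (mul_ne_zero hz hw), Complex.log_mul hz hw h, sqrt_eq_exp hz,
    sqrt_eq_exp hw, ← Complex.exp_add, add_div]

lemma csqrt_ofReal_mul {x : ℝ} (hx : 0 < x) {z : ℂ} (hz : z ≠ 0) :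
    Complex.sqrt (x * z) = √x * Complex.sqrt z := by
  rw [csqrt_mul (mod_cast hx.ne') hz, csqrt_ofReal hx.le]
  simpa [Complex.arg_ofReal_of_nonneg hx.le] using Complex.arg_mem_Ioc z

lemma csqrt_I_mul {z : ℂ} (hz : 0 < z.re) :
    Complex.sqrt (I * z) = Complex.sqrt I * Complex.sqrt z := by
  have harg := abs_lt.1 (Complex.abs_arg_lt_pi_div_two_iff.2 (Or.inl hz))
  refine csqrt_mul Complex.I_ne_zero (fun h ↦ by simp [h] at hz) ?_
  rw [Complex.arg_I]
  constructor <;> linarith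

end ComplexSqrt

section ModularTransformation

variable {z : ℂ}

lemma norm_exp_neg_lt_one (hz : 0 < z.re) : ‖Complex.exp (-z)‖ < 1 := by
  rw [Complex.norm_exp, exp_lt_one_iff, Complex.neg_re, neg_lt_zero]
  exact hz

lemma re_ofReal_div_pos {x : ℝ} (hx : 0 < x) (hz : 0 < z.re) : 0 < ((x : ℂ) / z).re := by
  rw [div_eq_mul_inv, Complex.re_ofReal_mul, Complex.inv_re]
  have := Complex.normSq_pos.2 fun h : z = 0 ↦ by simp [h] at hz
  positivity

lemma eta_I_mul_eq (hz : 0 < z.re) :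
    ModularForm.eta (I * (z / (2 * π))) =
      Complex.exp (-(z / 24)) * (partitionGF (Complex.exp (-z)))⁻¹ := by
  have hexp : 2 * π * I * (I * (z / (2 * π))) = -z := by
    have hpi : (π : ℂ) ≠ 0 := mod_cast pi_ne_zero
    field_simp
    linear_combination z * Complex.I_sq
  rw [partitionGF_eq_inv_tprod (norm_exp_neg_lt_one hz), inv_inv]
  simp only [ModularForm.eta, ModularForm.eta_q_eq_pow, Function.Periodic.qParam, hexp]
  norm_num [neg_div]

lemma eta_I_div_eq (hz : 0 < z.re) :
    ModularForm.eta (I / z) = Complex.sqrt z * ModularForm.eta (I * z) := by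
  have him : I * z ∈ UpperHalfPlane.upperHalfPlaneSet := by
    simpa [UpperHalfPlane.upperHalfPlaneSet] using hz
  have hsqrtI : Complex.sqrt I ≠ 0 := by simp [Complex.sqrt]
  have h := ModularForm.eta_comp_eq_csqrt_I_inv him
  simp only [Function.comp, Pi.smul_apply, Pi.mul_apply, smul_eq_mul] at h
  rwa [csqrt_I_mul hz, mul_assoc, inv_mul_cancel_left₀ hsqrtI, div_mul_eq_div_div, neg_div,
    one_div, Complex.inv_I, neg_neg] at h

lemma partitionGF_exp_neg (hz : 0 < z.re) :
    partitionGF (Complex.exp (-z)) =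
      Complex.sqrt z / √(2 * π) * Complex.exp (π ^ 2 / 6 / z - z / 24) *
        partitionGF (Complex.exp (-(4 * π ^ 2 / z))) := by
  have hz0 : z ≠ 0 := fun h ↦ by simp [h] at hz
  have hpi : (π : ℂ) ≠ 0 := mod_cast pi_ne_zero
  have hs : ((√(2 * π) : ℝ) : ℂ) ≠ 0 := mod_cast (sqrt_pos.2 two_pi_pos).ne'
  have hz' : 0 < (z / (2 * π)).re := by
    have := div_pos hz two_pi_pos
    rwa [← Complex.div_ofReal_re, Complex.ofReal_mul, Complex.ofReal_ofNat] at this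
  have hw : 0 < (4 * π ^ 2 / z).re := by
    have h := re_ofReal_div_pos (x := 4 * π ^ 2) (by positivity) hz
    push_cast at h
    exact h
  have hsqrt : Complex.sqrt z = √(2 * π) * Complex.sqrt (z / (2 * π)) := by
    rw [← csqrt_ofReal_mul two_pi_pos (by simp [hz0, hpi])]
    push_cast
    rw [mul_div_cancel₀ z (by simp [hpi])]
  have heta := eta_I_div_eq hz'
  rw [eta_I_mul_eq hz, show I / (z / (2 * π)) = I * (4 * π ^ 2 / z / (2 * π)) by field_simp; ring,
    eta_I_mul_eq hw] at heta
  have hgf := partitionGF_ne_zero (norm_exp_neg_lt_one hz)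
  have hgf' := partitionGF_ne_zero (norm_exp_neg_lt_one hw)
  have hexp : Complex.exp (π ^ 2 / 6 / z - z / 24) * Complex.exp (-(4 * π ^ 2 / z / 24)) =
      Complex.exp (-(z / 24)) := by
    rw [← Complex.exp_add]
    congr 1
    ring
  have hne := Complex.exp_ne_zero (-(4 * π ^ 2 / z / 24))
  rw [hsqrt, mul_div_cancel_left₀ _ hs, ← mul_right_inj' hne]
  calc _ = partitionGF (Complex.exp (-z)) * partitionGF (Complex.exp (-(4 * π ^ 2 / z))) *
        (Complex.exp (-(4 * π ^ 2 / z / 24)) *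
          (partitionGF (Complex.exp (-(4 * π ^ 2 / z))))⁻¹) := by field_simp
    _ = _ := by
      rw [heta, ← hexp]
      field_simp

end ModularTransformation

section GrowthOffRealAxis

variable {q : ℂ}

lemma norm_inv_one_sub_le (hq : ‖q‖ < 1) :
    ‖(1 - q)⁻¹‖ ≤ (1 - ‖q‖)⁻¹ * exp (q.re - ‖q‖) := by
  have htail := (hasSum_nat_add_iff' 1).2 (Complex.hasSum_taylorSeries_neg_log' hq)
  have htail' := (hasSum_nat_add_iff' 1).2
    (Real.hasSum_pow_div_log_of_abs_lt_one (x := ‖q‖) (by simpa using hq))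
  simp only [range_one, sum_singleton, zero_add, pow_one, Nat.cast_zero, div_one]
    at htail htail'
  have hre := (Complex.re_le_norm _).trans <| htail.norm_le_of_bounded htail' fun n ↦ by
    rw [norm_div, norm_pow]
    norm_cast
  have hne : 1 - q ≠ 0 := by simpa using one_sub_pow_ne_zero hq one_ne_zero
  rw [Complex.sub_re, Complex.neg_re, Complex.log_re] at hre
  rw [norm_inv, ← exp_log (norm_pos_iff.2 hne), ← exp_log (sub_pos.2 hq), ← exp_neg, ← exp_neg,
    ← exp_add, exp_le_exp]
  linarith

lemma norm_partitionGF_le (hq : ‖q‖ < 1) :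
    ‖partitionGF q‖ ≤ ‖partitionGF ‖q‖‖ * exp (((1 - q)⁻¹).re - (1 - ‖q‖)⁻¹) := by
  have hq' : ‖((‖q‖ : ℝ) : ℂ)‖ < 1 := by simpa using hq
  have hexp : HasSum (fun i : ℕ ↦ (q ^ (i + 1)).re - ‖q‖ ^ (i + 1))
      (((1 - q)⁻¹).re - (1 - ‖q‖)⁻¹) := by
    have h := (hasSum_nat_add_iff' 1).2 (Complex.hasSum_re (hasSum_geometric_of_norm_lt_one hq))
    have h' := (hasSum_nat_add_iff' 1).2 (hasSum_geometric_of_lt_one (norm_nonneg q) hq)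
    simpa using h.sub h'
  rw [partitionGF_eq_inv_tprod hq, partitionGF_eq_inv_tprod hq']
  refine le_of_tendsto_of_tendsto (tendsto_prod_inv_one_sub_pow hq).norm
    ((tendsto_prod_inv_one_sub_pow hq').norm.mul
      ((continuous_exp.tendsto _).comp hexp.tendsto_sum_nat)) (.of_forall fun K ↦ ?_)
  simp only [Function.comp, exp_sum, norm_prod, ← prod_mul_distrib]
  refine prod_le_prod (fun _ _ ↦ norm_nonneg _) fun i _ ↦ ?_
  have hqi : ‖q ^ (i + 1)‖ < 1 := norm_pow q _ ▸ pow_lt_one₀ (norm_nonneg q) hq i.succ_ne_zero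
  have hle := norm_inv_one_sub_le hqi
  rw [norm_pow] at hle hqi
  rwa [← Complex.ofReal_pow, ← Complex.ofReal_one, ← Complex.ofReal_sub, ← Complex.ofReal_inv,
    Complex.norm_of_nonneg (inv_nonneg.2 (sub_nonneg.2 hqi.le)), Complex.ofReal_one]

end GrowthOffRealAxis

section CauchyFormula

lemma integral_exp_int_mul (k : ℤ) (r : ℝ) :
    ∫ θ in (-π)..π, Complex.exp (k * (r + θ * I)) = if k = 0 then 2 * π else 0 := by
  split_ifs with hk
  · simp [hk, two_mul]
  · have hsplit (θ : ℝ) : Complex.exp (k * (r + θ * I)) =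
        Complex.exp (k * r) * Complex.exp (k * I * θ) := by
      rw [← Complex.exp_add]
      ring_nf
    have hperiod : Complex.exp (k * I * π) = Complex.exp (k * I * (-π : ℝ)) :=
      Complex.exp_eq_exp_iff_exists_int.2 ⟨k, by push_cast; ring⟩
    simp_rw [hsplit]
    rw [intervalIntegral.integral_const_mul, integral_exp_mul_complex (by simp [hk]), hperiod]
    simp

lemma integral_tsum_mul_exp_pow {c : ℕ → ℂ} {r : ℝ}
    (hc : Summable fun m ↦ ‖c m‖ * exp (-r) ^ m) (n : ℕ) :
    ∫ θ in (-π)..π, (∑' m, c m * Complex.exp (-(r + θ * I)) ^ m) *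
      Complex.exp (n * (r + θ * I)) = 2 * π * c n := by
  have hnorm (m : ℕ) (θ : ℝ) :
      ‖c m * Complex.exp (-(r + θ * I)) ^ m‖ = ‖c m‖ * exp (-r) ^ m := by
    rw [norm_mul, norm_pow, Complex.norm_exp]
    simp
  have hterm (m : ℕ) (θ : ℝ) : c m * Complex.exp (-(r + θ * I)) ^ m *
      Complex.exp (n * (r + θ * I)) = c m * Complex.exp ((n - m : ℤ) * (r + θ * I)) := by
    rw [← Complex.exp_nat_mul, mul_assoc, ← Complex.exp_add]
    congr 2
    push_cast
    ring
  have hsum := intervalIntegral.hasSum_integral_of_dominated_convergence (a := -π) (b := π)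
    (μ := volume) (F := fun m (θ : ℝ) ↦ c m * Complex.exp (-(r + θ * I)) ^ m *
      Complex.exp (n * (r + θ * I))) (fun m _ ↦ ‖c m‖ * exp (-r) ^ m * exp (n * r))
    (fun m ↦ Continuous.aestronglyMeasurable (by fun_prop))
    (fun m ↦ .of_forall fun θ _ ↦ by rw [norm_mul, hnorm, Complex.norm_exp]; simp)
    (.of_forall fun θ _ ↦ hc.mul_right _) intervalIntegrable_const
    (.of_forall fun θ _ ↦ ((hc.congr fun m ↦ (hnorm m θ).symm).of_norm.hasSum).mul_right _)
  simp_rw [hterm, intervalIntegral.integral_const_mul, integral_exp_int_mul] at hsum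
  rw [← hsum.tsum_eq, tsum_eq_single n fun m hm ↦ ?_]
  · rw [sub_self, if_pos rfl]
    push_cast
    ring
  · rw [if_neg (by lia), Complex.ofReal_zero, mul_zero]

lemma continuous_partitionGF_exp {r : ℝ} (hr : 0 < r) :
    Continuous fun θ : ℝ ↦ partitionGF (Complex.exp (-(r + θ * I))) :=
  continuous_tsum (fun n ↦ by fun_prop)
    (summable_p_mul_pow (exp_pos (-r)).le (exp_lt_one_iff.2 (neg_lt_zero.2 hr)))
    fun n θ ↦ by rw [norm_p_mul_pow, Complex.norm_exp]; simp

lemma integral_partitionGF_mul_exp {r : ℝ} (hr : 0 < r) (n : ℕ) :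
    ∫ θ in (-π)..π, partitionGF (Complex.exp (-(r + θ * I))) * Complex.exp (n * (r + θ * I)) =
      2 * π * p n :=
  integral_tsum_mul_exp_pow (c := fun m ↦ p m)
    ((summable_p_mul_pow (exp_pos (-r)).le (exp_lt_one_iff.2 (neg_lt_zero.2 hr))).congr
      fun m ↦ by rw [Complex.norm_of_nonneg (p_nonneg m)]) n

end CauchyFormula

section Contour

variable {r α : ℝ}

lemma intervalIntegral_comp_mul_deriv_eq_sub {f F : ℂ → ℂ} {U : Set ℂ} {γ γ' : ℝ → ℂ} {a b : ℝ}
    (hf : ContinuousOn f U) (hF : ∀ z ∈ U, HasDerivAt F (f z) z)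
    (hγ : ∀ t, HasDerivAt γ (γ' t) t) (hγ' : Continuous γ') (hU : ∀ t ∈ Set.uIcc a b, γ t ∈ U) :
    ∫ t in a..b, f (γ t) * γ' t = F (γ b) - F (γ a) := by
  have hγc : Continuous γ := continuous_iff_continuousAt.2 fun t ↦ (hγ t).continuousAt
  exact intervalIntegral.integral_eq_sub_of_hasDerivAt
    (fun t ht ↦ (hF _ (hU t ht)).comp t (hγ t))
    ((hf.comp hγc.continuousOn hU).mul hγ'.continuousOn).intervalIntegrable

lemma re_pos_of_mem_ball {R : ℝ} {z : ℂ} (h : z ∈ Metric.ball (R : ℂ) R) : 0 < z.re := by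
  have hre := (Complex.abs_re_le_norm _).trans_lt (mem_ball_iff_norm.1 h)
  rw [Complex.sub_re, Complex.ofReal_re, abs_lt] at hre
  linarith

lemma mem_ball_of_le_re_of_norm_le {c : ℝ} {z : ℂ} (hr : 0 < r) (hc : 0 < c)
    (hre : r * c ≤ z.re) (hnorm : ‖z‖ ≤ r / c) :
    z ∈ Metric.ball ((r / c ^ 3 : ℝ) : ℂ) (r / c ^ 3) := by
  have hR : 0 < r / c ^ 3 := by positivity
  have hsq : z.re ^ 2 + z.im ^ 2 ≤ r / c ^ 3 * (r * c) := by
    calc z.re ^ 2 + z.im ^ 2 = ‖z‖ ^ 2 := by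
          rw [← Complex.normSq_eq_norm_sq, Complex.normSq_apply]
          ring
      _ ≤ (r / c) ^ 2 := by gcongr
      _ = r / c ^ 3 * (r * c) := by field_simp
  rw [mem_ball_iff_norm, ← sq_lt_sq₀ (norm_nonneg _) hR.le, ← Complex.normSq_eq_norm_sq,
    Complex.normSq_apply, Complex.sub_re, Complex.sub_im, Complex.ofReal_re, Complex.ofReal_im]
  have hlin : r / c ^ 3 * (r * c) ≤ r / c ^ 3 * z.re := by gcongr
  have hpos : 0 < r / c ^ 3 * (r * c) := by positivity
  linarith

lemma isExactOn_of_differentiableOn_re_pos {f : ℂ → ℂ} {c : ℝ}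
    (hf : DifferentiableOn ℂ f {z | 0 < z.re}) (hr : 0 < r) (hc : 0 < c) :
    Complex.IsExactOn f {z | r * c ≤ z.re ∧ ‖z‖ ≤ r / c} := by
  obtain ⟨F, hF⟩ := (hf.mono fun z ↦ re_pos_of_mem_ball (R := r / c ^ 3)).isExactOn_ball
  exact ⟨F, fun z hz ↦ hF z (mem_ball_of_le_re_of_norm_le hr hc hz.1 hz.2)⟩

lemma cos_le_cos_of_abs_le {θ φ : ℝ} (hφ : φ ≤ π) (h : |θ| ≤ φ) : cos φ ≤ cos θ :=
  cos_abs θ ▸ cos_le_cos_of_nonneg_of_le_pi (abs_nonneg θ) hφ h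

lemma add_tan_mul_I_eq (hα : cos α ≠ 0) :
    (r : ℂ) + (r * tan α : ℝ) * I = (r / cos α : ℝ) * Complex.exp (α * I) := by
  rw [Complex.exp_mul_I, tan_eq_sin_div_cos, ← Complex.ofReal_cos, ← Complex.ofReal_sin]
  have hcos : (cos α : ℂ) ≠ 0 := mod_cast hα
  push_cast at hcos ⊢
  field_simp

lemma norm_add_mul_I_le {θ : ℝ} (hr : 0 < r) (hα : 0 < cos α) (hθ : |θ| ≤ r * tan α) :
    ‖(r : ℂ) + θ * I‖ ≤ r / cos α := by
  have hsec := one_add_tan_sq_mul_cos_sq_eq_one hα.ne'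
  have hθ' := sq_le_sq' (abs_le.1 hθ).1 (abs_le.1 hθ).2
  rw [Complex.norm_add_mul_I, sqrt_le_left (by positivity)]
  calc r ^ 2 + θ ^ 2 ≤ r ^ 2 * (1 + tan α ^ 2) := by linarith
    _ = (r / cos α) ^ 2 := by
      rw [eq_inv_of_mul_eq_one_left hsec]
      field_simp

lemma integral_vertical_sub_integral_arc {f : ℂ → ℂ}
    (hf : DifferentiableOn ℂ f {z | 0 < z.re}) (hr : 0 < r) (hα0 : 0 ≤ α) (hα : α < π / 2) :
    (∫ θ in (-(r * tan α))..(r * tan α), f (r + θ * I) * I) -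
        ∫ φ in (-α)..α, f (r * Complex.exp (φ * I)) * (r * (Complex.exp (φ * I) * I)) =
      (∫ t in r..(r / cos α), f (t * Complex.exp (α * I)) * Complex.exp (α * I)) -
        ∫ t in r..(r / cos α), f (t * Complex.exp ((-α : ℝ) * I)) *
          Complex.exp ((-α : ℝ) * I) := by
  have hcos : 0 < cos α := cos_pos_of_mem_Ioo ⟨by linarith, hα⟩
  have hcos1 : cos α ≤ 1 := cos_le_one α
  have hr' : r ≤ r / cos α := le_div_self hr.le hcos hcos1
  have hrcos : r * cos α ≤ r := mul_le_of_le_one_right hr.le hcos1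
  have htan : 0 ≤ r * tan α := mul_nonneg hr.le (tan_nonneg_of_nonneg_of_le_pi_div_two hα0 hα.le)
  have hfU : ContinuousOn f {z | r * cos α ≤ z.re ∧ ‖z‖ ≤ r / cos α} :=
    hf.continuousOn.mono fun z hz ↦ (mul_pos hr hcos).trans_le hz.1
  obtain ⟨F, hF⟩ := isExactOn_of_differentiableOn_re_pos hf hr hcos
  have hray {β : ℝ} (hβ : cos β = cos α) := intervalIntegral_comp_mul_deriv_eq_sub (a := r)
    (b := r / cos α) hfU hF
    (fun t ↦ (Complex.ofRealCLM.hasDerivAt (x := t)).mul_const (Complex.exp (β * I)))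
    (by fun_prop) fun t ht ↦ by
      rw [Set.uIcc_of_le hr'] at ht
      have ht0 : 0 ≤ t := hr.le.trans ht.1
      refine ⟨?_, ?_⟩
      · simpa [Complex.exp_ofReal_mul_I_re, hβ] using mul_le_mul_of_nonneg_right ht.1 hcos.le
      · simpa [abs_of_nonneg ht0] using ht.2
  have hvertical := intervalIntegral_comp_mul_deriv_eq_sub (a := -(r * tan α)) (b := r * tan α)
    hfU hF
    (fun t ↦ ((Complex.ofRealCLM.hasDerivAt (x := t)).mul_const I).const_add (r : ℂ))
    (by fun_prop) fun t ht ↦ by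
      rw [Set.uIcc_of_le (by linarith)] at ht
      exact ⟨by simpa using hrcos, norm_add_mul_I_le hr hcos (abs_le.2 ht)⟩
  have harc := intervalIntegral_comp_mul_deriv_eq_sub (a := -α) (b := α) hfU hF
    (fun t ↦ ((Complex.ofRealCLM.hasDerivAt (x := t)).mul_const I).cexp.const_mul (r : ℂ))
    (by fun_prop) fun t ht ↦ by
      rw [Set.uIcc_of_le (by linarith)] at ht
      have hcost : cos α ≤ cos t := cos_le_cos_of_abs_le (by linarith) (abs_le.2 ht)
      refine ⟨?_, ?_⟩
      · simpa [Complex.exp_ofReal_mul_I_re] using mul_le_mul_of_nonneg_left hcost hr.le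
      · simpa [abs_of_pos hr] using hr'
  have hendpoint : (r : ℂ) + (-(r * tan α) : ℝ) * I =
      (r / cos α : ℝ) * Complex.exp ((-α : ℝ) * I) := by
    simpa only [tan_neg, cos_neg, mul_neg] using
      add_tan_mul_I_eq (r := r) (α := -α) (by rw [cos_neg]; exact hcos.ne')
  have hray₁ := hray (β := α) rfl
  have hray₂ := hray (β := -α) (cos_neg α)
  simp only [Complex.ofRealCLM_apply, Complex.ofReal_one, one_mul] at hray₁ hray₂ hvertical harc
  rw [hray₁, hray₂, hvertical, harc, hendpoint, add_tan_mul_I_eq hcos.ne']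
  ring

end Contour

section BesselIntegral

/-- The integrand `√z exp (a / z + N z)` whose integral along a vertical line is, up to elementary
factors, a modified Bessel function of order `3 / 2`. -/
noncomputable def besselIntegrand (a N : ℝ) (z : ℂ) : ℂ :=
  Complex.sqrt z * Complex.exp (a / z + N * z)

lemma differentiableOn_besselIntegrand (a N : ℝ) :
    DifferentiableOn ℂ (besselIntegrand a N) {z | 0 < z.re} := by
  intro z hz
  have hz0 : z ≠ 0 := fun h ↦ by simp [h] at hz
  have hsqrt := Complex.differentiableAt_sqrt (Complex.mem_slitPlane_iff.2 (Or.inl hz))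
  unfold besselIntegrand
  exact DifferentiableAt.differentiableWithinAt (by fun_prop (disch := exact hz0))

variable {a r α : ℝ}

lemma norm_besselIntegrand_mul_exp_I {N t : ℝ} (ht : 0 < t) (φ : ℝ) :
    ‖besselIntegrand a N (t * Complex.exp (φ * I))‖ =
      √t * exp ((a / t + N * t) * cos φ) := by
  have hexp : (a : ℂ) / (t * Complex.exp (φ * I)) + N * (t * Complex.exp (φ * I)) =
      (a / t : ℝ) * Complex.exp ((-φ : ℝ) * I) + (N * t : ℝ) * Complex.exp (φ * I) := by
    rw [Complex.ofReal_neg, neg_mul, Complex.exp_neg]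
    push_cast
    field_simp
  rw [besselIntegrand, norm_mul, norm_csqrt, norm_mul, Complex.norm_exp_ofReal_mul_I, mul_one,
    Complex.norm_of_nonneg ht.le, Complex.norm_exp, hexp, Complex.add_re, Complex.re_ofReal_mul,
    Complex.re_ofReal_mul, Complex.exp_ofReal_mul_I_re, Complex.exp_ofReal_mul_I_re, cos_neg,
    add_mul]

lemma norm_integral_besselIntegrand_ray_le (ha : 0 ≤ a) (hr : 0 < r) (hα : 0 < cos α) :
    ‖∫ t in r..(r / cos α), besselIntegrand a (a / r ^ 2) (t * Complex.exp (α * I)) *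
        Complex.exp (α * I)‖ ≤
      √(r / cos α) * exp (a / r * (1 + cos α ^ 2)) * (r * (1 / cos α - 1)) := by
  have hr' : r ≤ r / cos α := le_div_self hr.le hα (cos_le_one α)
  refine (intervalIntegral.norm_integral_le_of_norm_le_const
    (C := √(r / cos α) * exp (a / r * (1 + cos α ^ 2))) fun t ht ↦ ?_).trans_eq ?_
  · rw [Set.uIoc_of_le hr'] at ht
    have ht0 : 0 < t := hr.trans ht.1
    rw [norm_mul, Complex.norm_exp_ofReal_mul_I, mul_one, norm_besselIntegrand_mul_exp_I ht0]
    gcongr ?_ * exp ?_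
    · exact sqrt_le_sqrt ht.2
    · have hfactor : a / r * (1 + cos α ^ 2) - (a / t + a / r ^ 2 * t) * cos α =
          a / (r ^ 2 * t) * ((t - r * cos α) * (r - t * cos α)) := by
        field_simp
        ring
      have h₁ : 0 ≤ t - r * cos α := by nlinarith [cos_le_one α, ht.1]
      have h₂ : 0 ≤ r - t * cos α := sub_nonneg.2 ((le_div_iff₀ hα).1 ht.2)
      have := mul_nonneg (div_nonneg ha (by positivity : 0 ≤ r ^ 2 * t)) (mul_nonneg h₁ h₂)
      linarith
  · rw [abs_of_nonneg (sub_nonneg.2 hr')]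
    ring

lemma besselIntegrand_arc_mul_deriv (hr : 0 < r) {φ : ℝ} (hφ : |φ| < π) :
    besselIntegrand a (a / r ^ 2) (r * Complex.exp (φ * I)) * (r * Complex.exp (φ * I)) =
      (r * √r * exp (2 * a / r * cos φ) : ℝ) * Complex.exp ((3 * φ / 2 : ℝ) * I) := by
  have hexp : (a : ℂ) / (r * Complex.exp (φ * I)) + (a / r ^ 2 : ℝ) * (r * Complex.exp (φ * I)) =
      (2 * a / r * cos φ : ℝ) := by
    have hr0 : (r : ℂ) ≠ 0 := mod_cast hr.ne'
    rw [div_mul_eq_div_div, div_eq_mul_inv _ (Complex.exp _), ← Complex.exp_neg]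
    push_cast
    rw [Complex.cos]
    field_simp
    ring
  have hpow : Complex.exp ((3 * φ / 2 : ℝ) * I) =
      Complex.exp (φ * I / 2) * Complex.exp (φ * I) := by
    rw [← Complex.exp_add]
    push_cast
    ring_nf
  rw [besselIntegrand, hexp, csqrt_ofReal_mul hr (Complex.exp_ne_zero _),
    csqrt_exp (by simpa using (abs_lt.1 hφ).1) (by simpa using (abs_lt.1 hφ).2.le), hpow]
  push_cast
  ring

lemma re_integral_besselIntegrand_arc (hr : 0 < r) (hα0 : 0 ≤ α) (hα : α < π) :
    (∫ φ in (-α)..α, besselIntegrand a (a / r ^ 2) (r * Complex.exp (φ * I)) *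
        (r * Complex.exp (φ * I))).re =
      r * √r * ∫ φ in (-α)..α, cos (3 * φ / 2) * exp (2 * a / r * cos φ) := by
  rw [intervalIntegral.integral_congr fun φ hφ ↦ besselIntegrand_arc_mul_deriv hr <|
    (abs_le.2 (by rwa [Set.uIcc_of_le (by linarith)] at hφ)).trans_lt hα]
  rw [← Complex.reCLM_apply, ← Complex.reCLM.intervalIntegral_comp_comm
    (Continuous.intervalIntegrable (by fun_prop) _ _), ← intervalIntegral.integral_const_mul]
  refine intervalIntegral.integral_congr fun φ _ ↦ ?_
  simp only [Complex.reCLM_apply, Complex.re_ofReal_mul, Complex.exp_ofReal_mul_I_re]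
  ring

lemma abs_re_integral_besselIntegrand_sub_le (ha : 0 ≤ a) (hr : 0 < r) (hα0 : 0 ≤ α)
    (hα : α < π / 2) :
    |(∫ θ in (-(r * tan α))..(r * tan α), besselIntegrand a (a / r ^ 2) (r + θ * I)).re -
        r * √r * ∫ φ in (-α)..α, cos (3 * φ / 2) * exp (2 * a / r * cos φ)| ≤
      2 * (√(r / cos α) * exp (a / r * (1 + cos α ^ 2)) * (r * (1 / cos α - 1))) := by
  have hcos : 0 < cos α := cos_pos_of_mem_Ioo ⟨by linarith, hα⟩
  have hcontour := integral_vertical_sub_integral_arc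
    (differentiableOn_besselIntegrand a (a / r ^ 2)) hr hα0 hα
  have hray₁ := norm_integral_besselIntegrand_ray_le ha hr hcos
  have hray₂ := norm_integral_besselIntegrand_ray_le ha hr (cos_neg α ▸ hcos)
  rw [cos_neg] at hray₂
  rw [← re_integral_besselIntegrand_arc hr hα0 (by linarith), ← Complex.sub_re]
  have hnorm (z : ℂ) : ‖z‖ = ‖z * I‖ := by rw [norm_mul, Complex.norm_I, mul_one]
  refine (Complex.abs_re_le_norm _).trans ?_
  rw [hnorm, sub_mul, ← intervalIntegral.integral_mul_const, ← intervalIntegral.integral_mul_const]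
  simp only [mul_assoc _ _ I]
  rw [hcontour]
  exact (norm_sub_le _ _).trans (by linarith)

lemma integral_cos_mul_exp_cos (x α : ℝ) :
    ∫ φ in (-α)..α, cos (3 * φ / 2) * exp (x * cos φ) =
      ∫ y in (-(2 * sin (α / 2)))..(2 * sin (α / 2)), (1 - y ^ 2) * exp (x * (1 - y ^ 2 / 2)) := by
  have hderiv (φ : ℝ) : HasDerivAt (fun φ ↦ 2 * sin (φ / 2)) (cos (φ / 2)) φ := by
    refine (((hasDerivAt_id φ).div_const 2).sin.const_mul 2).congr_deriv ?_
    simp only [id]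
    ring
  have hsubst := intervalIntegral.integral_comp_mul_deriv (a := -α) (b := α)
    (g := fun y ↦ (1 - y ^ 2) * exp (x * (1 - y ^ 2 / 2))) (fun φ _ ↦ hderiv φ) (by fun_prop)
    (by fun_prop)
  rw [neg_div, sin_neg, mul_neg] at hsubst
  rw [← hsubst]
  refine intervalIntegral.integral_congr fun φ _ ↦ ?_
  have htriple : cos (3 * φ / 2) = 4 * cos (φ / 2) ^ 3 - 3 * cos (φ / 2) := by
    rw [← cos_three_mul]
    ring_nf
  have hdouble : cos φ = 1 - (2 * sin (φ / 2)) ^ 2 / 2 := by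
    rw [← mul_div_cancel₀ φ two_ne_zero, cos_two_mul, mul_div_cancel_left₀ _ two_ne_zero, cos_sq']
    ring
  have hcubic : cos (3 * φ / 2) = (1 - (2 * sin (φ / 2)) ^ 2) * cos (φ / 2) := by
    rw [htriple, mul_pow, sin_sq]
    ring
  simp only [Function.comp, hcubic, ← hdouble]
  ring

end BesselIntegral

section GaussianMoment

variable {b c x : ℝ}

lemma integral_exp_neg_mul_sq_Ioi_le (hb : 0 < b) (hc : 0 < c) :
    ∫ y in Set.Ioi c, exp (-b * y ^ 2) ≤ exp (-b * c ^ 2) / (b * c) := by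
  have hbc : -(b * c) < 0 := neg_neg_of_pos (mul_pos hb hc)
  calc ∫ y in Set.Ioi c, exp (-b * y ^ 2) ≤ ∫ y in Set.Ioi c, exp (-(b * c) * y) := by
        refine setIntegral_mono_on (integrable_exp_neg_mul_sq hb).integrableOn
          (integrableOn_exp_mul_Ioi hbc c) measurableSet_Ioi fun y (hy : c < y) ↦ ?_
        have : b * y * c ≤ b * y * y := by have := hc.trans hy; gcongr
        exact exp_le_exp.2 (by linarith)
    _ = exp (-b * c ^ 2) / (b * c) := by
        rw [integral_exp_mul_Ioi hbc, neg_div_neg_eq]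
        ring_nf

lemma integral_exp_neg_mul_sq_eq_sqrt_sub (hb : 0 < b) (c : ℝ) :
    ∫ y in (-c)..c, exp (-b * y ^ 2) =
      √(π / b) - 2 * ∫ y in Set.Ioi c, exp (-b * y ^ 2) := by
  have hint : Integrable fun y : ℝ ↦ exp (-b * y ^ 2) := integrable_exp_neg_mul_sq hb
  have hhalf : ∫ y in (-c)..0, exp (-b * y ^ 2) = ∫ y in (0 : ℝ)..c, exp (-b * y ^ 2) := by
    rw [← neg_zero, ← intervalIntegral.integral_comp_neg]
    simp
  have htail := intervalIntegral.integral_interval_add_Ioi (a := 0) (b := c)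
    hint.integrableOn hint.integrableOn
  rw [integral_gaussian_Ioi] at htail
  rw [← intervalIntegral.integral_add_adjacent_intervals (b := 0)
    hint.intervalIntegrable hint.intervalIntegrable, hhalf]
  linarith

lemma integral_one_sub_mul_sq_mul_exp (b c : ℝ) :
    ∫ y in (-c)..c, (1 - 2 * b * y ^ 2) * exp (-b * y ^ 2) = 2 * c * exp (-b * c ^ 2) := by
  have hderiv (y : ℝ) : HasDerivAt (fun y ↦ y * exp (-b * y ^ 2))
      ((1 - 2 * b * y ^ 2) * exp (-b * y ^ 2)) y := by
    refine ((hasDerivAt_id y).mul ((hasDerivAt_pow 2 y).const_mul (-b)).exp).congr_deriv ?_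
    simp only [id]
    ring
  rw [intervalIntegral.integral_eq_sub_of_hasDerivAt (fun y _ ↦ hderiv y)
    (Continuous.intervalIntegrable (by fun_prop) _ _), neg_sq]
  ring

lemma integral_one_sub_sq_mul_exp_eq (hx : 0 < x) (c : ℝ) :
    ∫ y in (-c)..c, (1 - y ^ 2) * exp (x * (1 - y ^ 2 / 2)) =
      exp x * ((1 - 1 / x) * (√(2 * π / x) - 2 * ∫ y in Set.Ioi c, exp (-(x / 2) * y ^ 2)) +
        1 / x * (2 * c * exp (-(x / 2) * c ^ 2))) := by
  have hsqrt : 2 * π / x = π / (x / 2) := by field_simp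
  rw [hsqrt, ← integral_exp_neg_mul_sq_eq_sqrt_sub (half_pos hx),
    ← integral_one_sub_mul_sq_mul_exp, ← intervalIntegral.integral_const_mul,
    ← intervalIntegral.integral_const_mul, ← intervalIntegral.integral_add
      (Continuous.intervalIntegrable (by fun_prop) _ _)
      (Continuous.intervalIntegrable (by fun_prop) _ _), ← intervalIntegral.integral_const_mul]
  refine intervalIntegral.integral_congr fun y _ ↦ ?_
  have hexp : exp (x * (1 - y ^ 2 / 2)) = exp x * exp (-(x / 2) * y ^ 2) := by
    rw [← exp_add]
    ring_nf
  simp only [hexp]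
  field_simp
  ring

lemma abs_integral_one_sub_sq_mul_exp_sub_le (hx : 1 ≤ x) (hc : 0 < c) :
    |(∫ y in (-c)..c, (1 - y ^ 2) * exp (x * (1 - y ^ 2 / 2))) -
        exp x * (√(2 * π / x) * (1 - 1 / x))| ≤
      (2 * c + 4 / c) / x * exp (x * (1 - c ^ 2 / 2)) := by
  have hx0 : 0 < x := by linarith
  have htail : ∫ y in Set.Ioi c, exp (-(x / 2) * y ^ 2) ≤
      2 / c / x * exp (-(x / 2) * c ^ 2) :=
    (integral_exp_neg_mul_sq_Ioi_le (half_pos hx0) hc).trans_eq (by field_simp)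
  have htail0 : 0 ≤ ∫ y in Set.Ioi c, exp (-(x / 2) * y ^ 2) := by positivity
  have hexp : exp (x * (1 - c ^ 2 / 2)) = exp x * exp (-(x / 2) * c ^ 2) := by
    rw [← exp_add]
    ring_nf
  rw [integral_one_sub_sq_mul_exp_eq hx0, hexp]
  generalize (∫ y in Set.Ioi c, exp (-(x / 2) * y ^ 2)) = T at *
  have hE : 0 ≤ exp (-(x / 2) * c ^ 2) := (exp_pos _).le
  generalize exp (-(x / 2) * c ^ 2) = E at *
  have h0 : 0 ≤ 1 - 1 / x := sub_nonneg.2 ((div_le_one hx0).2 hx)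
  have h1 : 1 - 1 / x ≤ 1 := sub_le_self _ (by positivity)
  calc _ = |exp x * (2 * c / x * E) - exp x * (2 * ((1 - 1 / x) * T))| := by ring_nf
    _ ≤ exp x * (2 * c / x * E) + exp x * (2 * ((1 - 1 / x) * T)) :=
      (abs_sub _ _).trans_eq (by rw [abs_of_nonneg (by positivity), abs_of_nonneg (by positivity)])
    _ ≤ exp x * (2 * c / x * E) + exp x * (2 * (2 / c / x * E)) := by
      gcongr _ + _ * (2 * ?_)
      exact (mul_le_of_le_one_left htail0 h1).trans htail
    _ = _ := by ring

lemma abs_re_integral_besselIntegrand_sub_main_le {a r : ℝ} (hr : 0 < r) (hx : 1 ≤ 2 * a / r) :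
    |(∫ θ in (-(√3 * r))..(√3 * r), besselIntegrand a (a / r ^ 2) (r + θ * I)).re -
        r * √r * (exp (2 * a / r) * (√(2 * π / (2 * a / r)) * (1 - 1 / (2 * a / r))))| ≤
      9 * (r * √r) * exp (5 / 4 * (a / r)) := by
  have ha : 0 < a := by
    have := (one_le_div₀ hr).1 hx
    linarith
  have hcontour := abs_re_integral_besselIntegrand_sub_le ha.le hr (α := π / 3)
    (by positivity) (by linarith [pi_pos])
  have hmoment := abs_integral_one_sub_sq_mul_exp_sub_le hx one_pos
  have hsin : 2 * sin (π / 3 / 2) = 1 := by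
    rw [div_div, show (3 : ℝ) * 2 = 6 by norm_num, sin_pi_div_six]
    norm_num
  rw [integral_cos_mul_exp_cos, hsin, tan_pi_div_three, cos_pi_div_three, mul_comm r √3,
    div_eq_mul_inv r, sqrt_mul hr.le] at hcontour
  have hsqrt : √((1 / 2 : ℝ)⁻¹) ≤ 3 / 2 := by
    rw [sqrt_le_left (by norm_num)]
    norm_num
  have hhalf : 2 * a / r * (1 - 1 ^ 2 / 2) ≤ 5 / 4 * (a / r) := by
    have : 0 < a / r := by positivity
    linarith [mul_div_assoc 2 a r]
  have hmoment' := hmoment.trans (mul_le_mul (div_le_self (by norm_num) hx)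
    (exp_le_exp.2 hhalf) (exp_pos _).le (by norm_num))
  refine (abs_sub_le _ (r * √r * _) _).trans ((add_le_add_left hcontour _).trans ?_)
  rw [← mul_sub, abs_mul, abs_of_pos (mul_pos hr (sqrt_pos.2 hr)),
    show a / r * (1 + (1 / 2) ^ 2) = 5 / 4 * (a / r) by ring]
  calc _ ≤ 2 * (√r * (3 / 2) * exp (5 / 4 * (a / r)) * (r * (1 / (1 / 2) - 1))) +
        r * √r * ((2 * 1 + 4 / 1) * exp (5 / 4 * (a / r))) := by gcongr
    _ = _ := by ring

end GaussianMoment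

section MinorArc

lemma re_inv_one_sub_sub_inv_one_sub_norm {q : ℂ} (hq : ‖q‖ < 1) :
    ((1 - q)⁻¹).re - (1 - ‖q‖)⁻¹ =
      -((‖q‖ - q.re) * (1 + ‖q‖) / ((1 - ‖q‖) * ((1 - ‖q‖) ^ 2 + 2 * (‖q‖ - q.re)))) := by
  have hnormSq : Complex.normSq (1 - q) = (1 - ‖q‖) ^ 2 + 2 * (‖q‖ - q.re) := by
    rw [Complex.normSq_sub, Complex.normSq_eq_norm_sq q]
    simp
    ring
  have hpos : 0 < 1 - ‖q‖ := sub_pos.2 hq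
  have hden : 0 < (1 - ‖q‖) ^ 2 + 2 * (‖q‖ - q.re) := by
    have := sub_nonneg.2 (Complex.re_le_norm q)
    positivity
  rw [Complex.inv_re, hnormSq, Complex.sub_re, Complex.one_re]
  field_simp
  ring

lemma re_inv_one_sub_sub_inv_one_sub_norm_le {q : ℂ} {r : ℝ} (hq : ‖q‖ < 1) (hr : r ≤ 1 / 50)
    (hqr : 1 - ‖q‖ ≤ r) (hre : 5 / 4 * r ^ 2 ≤ ‖q‖ - q.re) :
    ((1 - q)⁻¹).re - (1 - ‖q‖)⁻¹ ≤ -(2 / 3 / r) := by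
  rw [re_inv_one_sub_sub_inv_one_sub_norm hq, neg_le_neg_iff]
  set δ := 1 - ‖q‖
  set k := ‖q‖ - q.re
  have hδ : 0 < δ := sub_pos.2 hq
  have hr0 : 0 < r := hδ.trans_le hqr
  have hk : 0 < k := lt_of_lt_of_le (by positivity) hre
  have hnum : 1 + ‖q‖ = 2 - δ := by ring
  have hδk : δ ^ 2 ≤ 4 / 5 * k := by
    have : δ ^ 2 ≤ r ^ 2 := by gcongr
    linarith
  rw [hnum, div_div, div_le_div_iff₀ (by positivity) (by positivity)]
  calc 2 * (δ * (δ ^ 2 + 2 * k)) ≤ 2 * (r * (4 / 5 * k + 2 * k)) := by gcongr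
    _ ≤ k * (2 - 1 / 50) * (3 * r) := by linarith [mul_pos hk hr0]
    _ ≤ k * (2 - δ) * (3 * r) := by
      gcongr
      linarith

lemma four_thirds_mul_sq_le_one_sub_cos {r θ : ℝ} (hr0 : 0 ≤ r) (hr : r ≤ 1 / 50)
    (hrθ : √3 * r ≤ |θ|) (hθ : |θ| ≤ π) : 4 / 3 * r ^ 2 ≤ 1 - cos θ := by
  have hsq : (√3 * r) ^ 2 = 3 * r ^ 2 := by rw [mul_pow, sq_sqrt (by norm_num)]
  have hsmall : |√3 * r| ≤ 1 := by
    rw [← sq_le_one_iff_abs_le_one, hsq]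
    nlinarith
  have hbound := (abs_le.1 (cos_bound hsmall)).2
  have hcos : cos θ ≤ cos (√3 * r) := by
    rw [← cos_abs θ]
    exact cos_le_cos_of_nonneg_of_le_pi (by positivity) hθ hrθ
  have hquartic : |√3 * r| ^ 4 = 9 * (r ^ 2 * r ^ 2) := by
    rw [show 4 = 2 * 2 by rfl, pow_mul, sq_abs, hsq]
    ring
  have hr2 : r ^ 2 * r ^ 2 ≤ r ^ 2 * (1 / 50) ^ 2 := by gcongr
  rw [hquartic, hsq] at hbound
  linarith [sq_nonneg r]

variable {r θ : ℝ}

lemma norm_exp_neg_add_mul_I (r θ : ℝ) : ‖Complex.exp (-(r + θ * I))‖ = exp (-r) := by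
  simp [Complex.norm_exp]

lemma re_inv_one_sub_exp_neg_sub_le (hr0 : 0 < r) (hr : r ≤ 1 / 50) (hrθ : √3 * r ≤ |θ|)
    (hθ : |θ| ≤ π) :
    ((1 - Complex.exp (-(r + θ * I)))⁻¹).re - (1 - exp (-r))⁻¹ ≤ -(2 / 3 / r) := by
  have hnorm := norm_exp_neg_add_mul_I r θ
  have hre : (Complex.exp (-(r + θ * I))).re = exp (-r) * cos θ := by simp [Complex.exp_re]
  have hexp : 1 - r ≤ exp (-r) := one_sub_le_exp_neg r
  rw [← hnorm]
  refine re_inv_one_sub_sub_inv_one_sub_norm_le ?_ hr ?_ ?_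
  · rwa [hnorm, exp_lt_one_iff, neg_lt_zero]
  · linarith
  · calc 5 / 4 * r ^ 2 ≤ (1 - 1 / 50) * (4 / 3 * r ^ 2) := by linarith [sq_nonneg r]
      _ ≤ exp (-r) * (1 - cos θ) := by
        gcongr
        · linarith
        · exact four_thirds_mul_sq_le_one_sub_cos hr0.le hr hrθ hθ
      _ = _ := by
        rw [hnorm, hre]
        ring

end MinorArc

section CircleMethod

lemma exp_neg_four_mul_pi_sq_mul_le {t : ℝ} (ht : 1 ≤ t) : exp (-(4 * π ^ 2 * t)) ≤ 1 / 4 := by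
  have hlarge : 3 ≤ 4 * π ^ 2 * t := by nlinarith [pi_gt_three]
  rw [exp_neg, one_div]
  exact inv_anti₀ (by norm_num) (by linarith [add_one_le_exp (4 * π ^ 2 * t)])

lemma norm_partitionGF_exp_neg_div_sub_one_le {z : ℂ} (hz : 1 ≤ (z⁻¹).re) :
    ‖partitionGF (Complex.exp (-(4 * π ^ 2 / z))) - 1‖ ≤ 4 * exp (-(4 * π ^ 2 * (z⁻¹).re)) := by
  have hnorm : ‖Complex.exp (-(4 * π ^ 2 / z))‖ = exp (-(4 * π ^ 2 * (z⁻¹).re)) := by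
    rw [Complex.norm_exp, Complex.neg_re, div_eq_mul_inv]
    norm_cast
    rw [Complex.re_ofReal_mul]
  rw [← hnorm]
  exact norm_partitionGF_sub_one_le (hnorm ▸ exp_neg_four_mul_pi_sq_mul_le hz)

lemma norm_partitionGF_exp_neg_ofReal_le {r : ℝ} (hr0 : 0 < r) (hr : r ≤ 1) :
    ‖partitionGF (Complex.exp (-r))‖ ≤ 2 * (√r / √(2 * π) * exp (π ^ 2 / 6 / r - r / 24)) := by
  have hinv : ((r : ℂ)⁻¹).re = r⁻¹ := by rw [← Complex.ofReal_inv, Complex.ofReal_re]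
  have hdual : ‖partitionGF (Complex.exp (-(4 * π ^ 2 / r)))‖ ≤ 2 := by
    have hr' : 1 ≤ ((r : ℂ)⁻¹).re := hinv ▸ (one_le_inv₀ hr0).2 hr
    have htri := norm_le_norm_sub_add (partitionGF (Complex.exp (-(4 * π ^ 2 / r)))) 1
    rw [norm_one] at htri
    linarith [norm_partitionGF_exp_neg_div_sub_one_le hr', exp_neg_four_mul_pi_sq_mul_le hr']
  have hexp : (π : ℂ) ^ 2 / 6 / r - r / 24 = (π ^ 2 / 6 / r - r / 24 : ℝ) := by
    push_cast
    ring
  rw [partitionGF_exp_neg (by simpa using hr0), norm_mul, norm_mul, norm_div, norm_csqrt,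
    Complex.norm_of_nonneg hr0.le, Complex.norm_of_nonneg (sqrt_nonneg _), hexp,
    Complex.norm_exp_ofReal]
  exact (mul_le_mul_of_nonneg_left hdual (by positivity)).trans_eq (mul_comm _ _)

lemma norm_partitionGF_mul_exp_sub_le {z : ℂ} (hz : 1 ≤ (z⁻¹).re) (n : ℕ) :
    ‖partitionGF (Complex.exp (-z)) * Complex.exp (n * z) -
        (√(2 * π))⁻¹ * besselIntegrand (π ^ 2 / 6) (n - 1 / 24) z‖ ≤
      4 * (√‖z‖ / √(2 * π)) * exp ((n - 1 / 24) * z.re) := by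
  have hre : 0 < z.re := by
    by_contra! h
    have := div_nonpos_of_nonpos_of_nonneg h (Complex.normSq_nonneg z)
    rw [← Complex.inv_re] at this
    linarith
  have hfactor : partitionGF (Complex.exp (-z)) * Complex.exp (n * z) -
      (√(2 * π))⁻¹ * besselIntegrand (π ^ 2 / 6) (n - 1 / 24) z =
      (√(2 * π))⁻¹ * besselIntegrand (π ^ 2 / 6) (n - 1 / 24) z *
        (partitionGF (Complex.exp (-(4 * π ^ 2 / z))) - 1) := by
    have hexp : Complex.exp (π ^ 2 / 6 / z - z / 24) * Complex.exp (n * z) =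
        Complex.exp ((π ^ 2 / 6 : ℝ) / z + (n - 1 / 24 : ℝ) * z) := by
      rw [← Complex.exp_add]
      push_cast
      ring_nf
    rw [partitionGF_exp_neg hre, besselIntegrand, ← hexp, Complex.ofReal_inv]
    ring
  have hnorm : ‖besselIntegrand (π ^ 2 / 6) (n - 1 / 24) z‖ =
      √‖z‖ * exp (π ^ 2 / 6 * (z⁻¹).re + (n - 1 / 24) * z.re) := by
    rw [besselIntegrand, norm_mul, norm_csqrt, Complex.norm_exp, Complex.add_re, div_eq_mul_inv,
      Complex.re_ofReal_mul, Complex.re_ofReal_mul]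
  have hdecay : exp (π ^ 2 / 6 * (z⁻¹).re + (n - 1 / 24) * z.re) *
      exp (-(4 * π ^ 2 * (z⁻¹).re)) ≤ exp ((n - 1 / 24) * z.re) := by
    rw [← exp_add, exp_le_exp]
    have : 0 ≤ π ^ 2 * (z⁻¹).re := by positivity
    linarith
  rw [hfactor, norm_mul, norm_mul, hnorm, Complex.norm_of_nonneg (by positivity)]
  calc _ ≤ (√(2 * π))⁻¹ * (√‖z‖ * exp (π ^ 2 / 6 * (z⁻¹).re + (n - 1 / 24) * z.re)) *
        (4 * exp (-(4 * π ^ 2 * (z⁻¹).re))) := by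
        gcongr
        exact norm_partitionGF_exp_neg_div_sub_one_le hz
    _ = 4 * (√‖z‖ / √(2 * π)) * (exp (π ^ 2 / 6 * (z⁻¹).re + (n - 1 / 24) * z.re) *
        exp (-(4 * π ^ 2 * (z⁻¹).re))) := by ring
    _ ≤ _ := by gcongr

variable {r θ : ℝ}

lemma norm_partitionGF_mul_exp_le_of_minorArc (hr0 : 0 < r) (hr : r ≤ 1 / 50)
    (hrθ : √3 * r ≤ |θ|) (hθ : |θ| ≤ π) (n : ℕ) :
    ‖partitionGF (Complex.exp (-(r + θ * I))) * Complex.exp (n * (r + θ * I))‖ ≤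
      2 * (√r / √(2 * π)) * exp ((π ^ 2 / 6 - 2 / 3) / r + (n - 1 / 24) * r) := by
  have hnorm := norm_exp_neg_add_mul_I r θ
  have hGF := norm_partitionGF_le (q := Complex.exp (-(r + θ * I)))
    (by rwa [hnorm, exp_lt_one_iff, neg_lt_zero])
  rw [hnorm, Complex.ofReal_exp, Complex.ofReal_neg] at hGF
  calc _ = ‖partitionGF (Complex.exp (-(r + θ * I)))‖ * exp (n * r) := by
        simp [Complex.norm_exp]
    _ ≤ 2 * (√r / √(2 * π) * exp (π ^ 2 / 6 / r - r / 24)) * exp (-(2 / 3 / r)) *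
        exp (n * r) := by
        gcongr
        refine hGF.trans ?_
        gcongr
        · exact norm_partitionGF_exp_neg_ofReal_le hr0 (by linarith)
        · exact re_inv_one_sub_exp_neg_sub_le hr0 hr hrθ hθ
    _ = 2 * (√r / √(2 * π)) *
        (exp (π ^ 2 / 6 / r - r / 24) * exp (-(2 / 3 / r)) * exp (n * r)) := by ring
    _ = _ := by
        rw [← exp_add, ← exp_add]
        ring_nf

lemma norm_partitionGF_mul_exp_sub_le_of_majorArc (hr0 : 0 < r) (hr : r ≤ 1 / 50)
    (hθ : |θ| ≤ √3 * r) (n : ℕ) :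
    ‖partitionGF (Complex.exp (-(r + θ * I))) * Complex.exp (n * (r + θ * I)) -
        (√(2 * π))⁻¹ * besselIntegrand (π ^ 2 / 6) (n - 1 / 24) (r + θ * I)‖ ≤
      4 * (√(2 * r) / √(2 * π)) * exp ((n - 1 / 24) * r) := by
  have hθ2 : θ ^ 2 ≤ 3 * r ^ 2 := by
    rw [← sq_abs θ]
    calc |θ| ^ 2 ≤ (√3 * r) ^ 2 := by gcongr
      _ = 3 * r ^ 2 := by rw [mul_pow, sq_sqrt (by norm_num)]
  have hnorm : ‖(r : ℂ) + θ * I‖ ≤ 2 * r := by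
    rw [Complex.norm_add_mul_I, sqrt_le_left (by positivity)]
    linarith
  have hinv : 1 ≤ (((r : ℂ) + θ * I)⁻¹).re := by
    rw [Complex.inv_re, Complex.normSq_add_mul_I, le_div_iff₀ (by positivity)]
    simp
    nlinarith
  refine (norm_partitionGF_mul_exp_sub_le hinv n).trans ?_
  simp only [Complex.add_re, Complex.ofReal_re, Complex.re_ofReal_mul, Complex.I_re, mul_zero,
    add_zero]
  gcongr

lemma norm_integral_sub_integral_le_of_arcs {F G : ℝ → ℂ} {b c B D : ℝ} (hF : Continuous F)
    (hG : Continuous G) (hc : 0 ≤ c) (hcb : c ≤ b)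
    (hB : ∀ θ, c ≤ |θ| → |θ| ≤ b → ‖F θ‖ ≤ B) (hD : ∀ θ, |θ| ≤ c → ‖F θ - G θ‖ ≤ D) :
    ‖(∫ θ in (-b)..b, F θ) - ∫ θ in (-c)..c, G θ‖ ≤ 2 * (b - c) * B + 2 * c * D := by
  have hleft : ‖∫ θ in (-b)..(-c), F θ‖ ≤ B * |-c - -b| :=
    intervalIntegral.norm_integral_le_of_norm_le_const fun θ hθ ↦ by
      rw [Set.uIoc_of_le (by linarith)] at hθ
      have hθ' : |θ| = -θ := abs_of_nonpos (by linarith [hθ.2])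
      exact hB θ (by linarith [hθ.2]) (by linarith [hθ.1])
  have hright : ‖∫ θ in c..b, F θ‖ ≤ B * |b - c| :=
    intervalIntegral.norm_integral_le_of_norm_le_const fun θ hθ ↦ by
      rw [Set.uIoc_of_le hcb] at hθ
      have hθ' : |θ| = θ := abs_of_nonneg (by linarith [hθ.1])
      exact hB θ (by linarith [hθ.1]) (by linarith [hθ.2])
  have hmiddle : ‖∫ θ in (-c)..c, (F θ - G θ)‖ ≤ D * |c - -c| :=
    intervalIntegral.norm_integral_le_of_norm_le_const fun θ hθ ↦ by
      rw [Set.uIoc_of_le (by linarith)] at hθ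
      exact hD θ (abs_le.2 ⟨hθ.1.le, hθ.2⟩)
  rw [abs_of_nonneg (by linarith)] at hleft hright hmiddle
  have hsplit : (∫ θ in (-b)..b, F θ) - ∫ θ in (-c)..c, G θ =
      (∫ θ in (-b)..(-c), F θ) + (∫ θ in (-c)..c, (F θ - G θ)) + ∫ θ in c..b, F θ := by
    rw [intervalIntegral.integral_sub (hF.intervalIntegrable _ _) (hG.intervalIntegrable _ _),
      ← intervalIntegral.integral_add_adjacent_intervals (hF.intervalIntegrable (-b) (-c))
      (hF.intervalIntegrable _ b), ← intervalIntegral.integral_add_adjacent_intervals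
      (hF.intervalIntegrable (-c) c) (hF.intervalIntegrable _ b)]
    ring
  rw [hsplit]
  exact (norm_add₃_le).trans (by linarith)

end CircleMethod

section MainTerm

/-- The argument `μ(n) = π √(24 n - 1) / 6` of the exponential in the Hardy–Ramanujan–Rademacher
formula for `p n`, as a function of `N = n - 1 / 24`. -/
noncomputable def mu (N : ℝ) : ℝ := π * √(2 / 3 * N)

/-- The leading term `√12 / (24 n - 1) * (1 - 1 / μ(n)) * exp (μ(n))` of the
Hardy–Ramanujan–Rademacher formula for `p n`, as a function of `N = n - 1 / 24`. -/
noncomputable def mainTerm (N : ℝ) : ℝ := √3 / (12 * N) * (1 - 1 / mu N) * exp (mu N)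

variable {N r : ℝ}

lemma mu_eq_div (hr : 0 < r) (hN : N * r ^ 2 = π ^ 2 / 6) : mu N = π ^ 2 / 3 / r := by
  have hsq : 2 / 3 * N = (π / 3 / r) ^ 2 := by
    rw [eq_div_of_mul_eq (by positivity) hN]
    field_simp
    norm_num
  rw [mu, hsq, sqrt_sq (by positivity)]
  ring

lemma sqrt_mul_sqrt_two_pi_div_mu (hr : 0 < r) (hN : N * r ^ 2 = π ^ 2 / 6) :
    √r * √(2 * π / mu N) = √(2 * π) * (√3 * r / π) := by
  have hsq : r * (2 * π / mu N) = 2 * π * (3 * (r / π) ^ 2) := by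
    rw [mu_eq_div hr hN]
    field_simp
  rw [← sqrt_mul hr.le, hsq, sqrt_mul (by positivity : 0 ≤ 2 * π),
    sqrt_mul zero_le_three, sqrt_sq (by positivity), mul_div_assoc]

lemma inv_two_pi_mul_besselMain_eq_mainTerm (hr : 0 < r) (hN : N * r ^ 2 = π ^ 2 / 6) :
    (2 * π)⁻¹ * ((√(2 * π))⁻¹ *
      (r * √r * (exp (mu N) * (√(2 * π / mu N) * (1 - 1 / mu N))))) = mainTerm N := by
  have hN0 : 0 < N := pos_of_mul_pos_left (hN ▸ by positivity) (sq_nonneg r)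
  calc _ = (2 * π)⁻¹ * (√(2 * π))⁻¹ * r * (√r * √(2 * π / mu N)) * (1 - 1 / mu N) *
        exp (mu N) := by ring
    _ = √3 / (12 * N) * (1 - 1 / mu N) * exp (mu N) := by
      rw [sqrt_mul_sqrt_two_pi_div_mu hr hN]
      congr 2
      field_simp
      linarith
    _ = mainTerm N := rfl

lemma norm_two_pi_mul_p_sub_integral_le {n : ℕ} (hr0 : 0 < r) (hr : r ≤ 1 / 50)
    (hn : (n - 1 / 24) * r ^ 2 = π ^ 2 / 6) :
    ‖2 * π * p n - (√(2 * π))⁻¹ * ∫ θ in (-(√3 * r))..(√3 * r),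
        besselIntegrand (π ^ 2 / 6) (n - 1 / 24) (r + θ * I)‖ ≤
      13 * ((√(2 * π))⁻¹ * √r) * exp ((π ^ 2 / 3 - 2 / 3) / r) := by
  have hnr : (n - 1 / 24) * r = π ^ 2 / 6 / r := by
    rw [eq_div_iff hr0.ne', ← hn]
    ring
  have hbessel : Continuous fun θ : ℝ ↦
      besselIntegrand (π ^ 2 / 6) (n - 1 / 24) (r + θ * I) :=
    (differentiableOn_besselIntegrand _ _).continuousOn.comp_continuous (by fun_prop)
      fun θ ↦ by simpa using hr0
  have hGF : Continuous fun θ : ℝ ↦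
      partitionGF (Complex.exp (-(r + θ * I))) * Complex.exp (n * (r + θ * I)) :=
    (continuous_partitionGF_exp hr0).mul (by fun_prop)
  have hsqrt3 : √3 ≤ 7 / 4 := (sqrt_le_left (by norm_num)).2 (by norm_num)
  have hsqrt2 : √2 ≤ 10 / 7 := (sqrt_le_left (by norm_num)).2 (by norm_num)
  have hexp : exp (π ^ 2 / 6 / r) ≤ exp ((π ^ 2 / 3 - 2 / 3) / r) := by
    gcongr
    nlinarith [pi_gt_three]
  have hexponent : (π ^ 2 / 6 - 2 / 3) / r + π ^ 2 / 6 / r = (π ^ 2 / 3 - 2 / 3) / r := by ring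
  have harcs := norm_integral_sub_integral_le_of_arcs hGF (hbessel.const_mul _)
    (by positivity : 0 ≤ √3 * r) (by nlinarith [pi_gt_three])
    (fun θ hθ hθ' ↦ norm_partitionGF_mul_exp_le_of_minorArc hr0 hr hθ hθ' n)
    (fun θ hθ ↦ norm_partitionGF_mul_exp_sub_le_of_majorArc hr0 hr hθ n)
  rw [integral_partitionGF_mul_exp hr0, intervalIntegral.integral_const_mul, hnr,
    sqrt_mul zero_le_two r, hexponent] at harcs
  have hlength : 2 * (π - √3 * r) ≤ 2 * 3.15 := by
    have : 0 ≤ √3 * r := by positivity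
    linarith [pi_lt_d2]
  calc _ ≤ _ := harcs
    _ ≤ 2 * 3.15 * (2 * (√r / √(2 * π)) * exp ((π ^ 2 / 3 - 2 / 3) / r)) +
        2 * (7 / 4 * (1 / 50)) *
          (4 * (10 / 7 * √r / √(2 * π)) * exp ((π ^ 2 / 3 - 2 / 3) / r)) := by
      gcongr
    _ = _ := by ring

lemma abs_two_pi_mul_p_sub_le {n : ℕ} (hr0 : 0 < r) (hr : r ≤ 1 / 50)
    (hn : (n - 1 / 24) * r ^ 2 = π ^ 2 / 6) :
    |2 * π * p n - (√(2 * π))⁻¹ * (r * √r * (exp (mu (n - 1 / 24)) *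
        (√(2 * π / mu (n - 1 / 24)) * (1 - 1 / mu (n - 1 / 24)))))| ≤
      (√(2 * π))⁻¹ * (14 * √r * exp ((π ^ 2 / 3 - 2 / 3) / r)) := by
  have hmu : 2 * (π ^ 2 / 6) / r = mu (n - 1 / 24) := by
    rw [mu_eq_div hr0 hn]
    ring
  have hmu1 : 1 ≤ 2 * (π ^ 2 / 6) / r := by
    rw [one_le_div₀ hr0]
    nlinarith [pi_gt_three]
  have hexp : exp (5 / 4 * (π ^ 2 / 6 / r)) ≤ exp ((π ^ 2 / 3 - 2 / 3) / r) := by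
    rw [← mul_div_assoc]
    gcongr
    nlinarith [pi_gt_three]
  have hcircle := (Complex.abs_re_le_norm _).trans (norm_two_pi_mul_p_sub_integral_le hr0 hr hn)
  have hbessel := abs_re_integral_besselIntegrand_sub_main_le hr0 hmu1
  have hre : (2 * π * p n : ℂ).re = 2 * π * p n := by norm_cast
  rw [Complex.sub_re, Complex.re_ofReal_mul, hre] at hcircle
  rw [← eq_div_of_mul_eq (by positivity) hn, hmu] at hbessel
  generalize Complex.re (∫ θ in (-(√3 * r))..(√3 * r), _) = B at hcircle hbessel
  calc _ ≤ _ := abs_sub_le _ ((√(2 * π))⁻¹ * B) _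
    _ ≤ 13 * ((√(2 * π))⁻¹ * √r) * exp ((π ^ 2 / 3 - 2 / 3) / r) +
        (√(2 * π))⁻¹ * (9 * (1 / 9 * √r) * exp ((π ^ 2 / 3 - 2 / 3) / r)) := by
      rw [← mul_sub, abs_mul, abs_of_nonneg (by positivity : 0 ≤ (√(2 * π))⁻¹)]
      refine add_le_add hcircle (mul_le_mul_of_nonneg_left (hbessel.trans ?_) (by positivity))
      gcongr
      linarith
    _ = _ := by ring

lemma abs_p_sub_mainTerm_le {n : ℕ} (hr0 : 0 < r) (hr : r ≤ 1 / 50)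
    (hn : (n - 1 / 24) * r ^ 2 = π ^ 2 / 6) :
    |p n - mainTerm (n - 1 / 24)| ≤ √r * exp ((π ^ 2 / 3 - 2 / 3) / r) := by
  have hsqrt : 5 / 2 ≤ √(2 * π) := le_sqrt_of_sq_le (by linarith [pi_gt_d2])
  calc |p n - mainTerm (n - 1 / 24)|
      = (2 * π)⁻¹ * |2 * π * p n - 2 * π * mainTerm (n - 1 / 24)| := by
        rw [← mul_sub, abs_mul, abs_of_pos two_pi_pos, inv_mul_cancel_left₀ two_pi_pos.ne']
    _ ≤ (2 * π)⁻¹ * ((√(2 * π))⁻¹ * (14 * √r * exp ((π ^ 2 / 3 - 2 / 3) / r))) := by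
      rw [← inv_two_pi_mul_besselMain_eq_mainTerm hr0 hn, mul_inv_cancel_left₀ two_pi_pos.ne']
      gcongr
      exact abs_two_pi_mul_p_sub_le hr0 hr hn
    _ ≤ (2 * 3)⁻¹ * ((5 / 2)⁻¹ * (14 * √r * exp ((π ^ 2 / 3 - 2 / 3) / r))) := by
      gcongr
      exact pi_gt_three.le
    _ ≤ _ := by linarith [mul_nonneg (sqrt_nonneg r) (exp_pos ((π ^ 2 / 3 - 2 / 3) / r)).le]

lemma four_hundred_mul_pow_six_le_exp {y : ℝ} (hy : 50 ≤ y) :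
    400 * y ^ 6 ≤ exp (2 / 3 * y) := by
  calc 400 * y ^ 6 ≤ (2 / 3) ^ 30 / (Nat.factorial 30 : ℝ) * 50 ^ 24 * y ^ 6 := by
        gcongr
        norm_num [Nat.factorial]
    _ ≤ (2 / 3) ^ 30 / (Nat.factorial 30 : ℝ) * y ^ 24 * y ^ 6 := by gcongr
    _ = (2 / 3 * y) ^ 30 / (Nat.factorial 30 : ℝ) := by ring
    _ ≤ exp (2 / 3 * y) := pow_div_factorial_le_exp _ (by positivity) 30

lemma exp_sub_div_le (hr0 : 0 < r) (hr : r ≤ 1 / 50) :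
    exp ((π ^ 2 / 3 - 2 / 3) / r) ≤ exp (π ^ 2 / 3 / r) * (r ^ 6 / 400) := by
  have hy : 50 ≤ 1 / r := (le_one_div (by norm_num) hr0).2 hr
  rw [sub_div, exp_sub, div_eq_mul_inv, ← mul_one_div (2 / 3)]
  gcongr
  rw [inv_le_comm₀ (exp_pos _) (by positivity)]
  exact le_trans (by field_simp; rfl) (four_hundred_mul_pow_six_le_exp hy)

lemma ninety_nine_div_le_one_sub_one_div_mu (hN : 3750 ≤ N) : 99 / 100 ≤ 1 - 1 / mu N := by
  have hsqrt : 50 ≤ √(2 / 3 * N) := le_sqrt_of_sq_le (by linarith)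
  have hmu : 100 ≤ mu N := by
    rw [mu]
    nlinarith [pi_gt_three]
  linarith [one_div_le_one_div_of_le (by norm_num) hmu]

lemma mainTerm_pos (hN : 3750 ≤ N) : 0 < mainTerm N := by
  have := ninety_nine_div_le_one_sub_one_div_mu hN
  have : 0 < 1 - 1 / mu N := by linarith
  rw [mainTerm]
  positivity

lemma log_mainTerm (hN : 3750 ≤ N) :
    log (mainTerm N) = log (√3 / 12) + mu N - log N + log (1 - 1 / mu N) := by
  have := ninety_nine_div_le_one_sub_one_div_mu hN
  have hN0 : N ≠ 0 := by linarith
  have hmu : 1 - 1 / mu N ≠ 0 := by linarith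
  rw [mainTerm, ← div_div, log_mul (by positivity) (exp_ne_zero _), log_mul (by positivity) hmu,
    log_div (by positivity) hN0, log_exp]
  ring

lemma abs_p_sub_mainTerm_le_mul {n : ℕ} (hr0 : 0 < r) (hr : r ≤ 1 / 50)
    (hn : (n - 1 / 24) * r ^ 2 = π ^ 2 / 6) :
    |p n - mainTerm (n - 1 / 24)| ≤
      mainTerm (n - 1 / 24) * (1 / (10 * (n - 1 / 24) ^ 2)) := by
  have hsqrt3 : 17 / 10 ≤ √3 := le_sqrt_of_sq_le (by norm_num)
  have hbound := abs_p_sub_mainTerm_le hr0 hr hn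
  have hmu := mu_eq_div hr0 hn
  generalize (n : ℝ) - 1 / 24 = N at *
  have hNr : N = π ^ 2 / 6 / r ^ 2 := eq_div_of_mul_eq (by positivity) hn
  have hN : 3750 ≤ N := by
    rw [hNr, le_div_iff₀ (by positivity)]
    nlinarith [pi_gt_three]
  have hN' : N ≤ 10 / 6 / r ^ 2 := by
    rw [hNr]
    gcongr
    nlinarith [pi_lt_d2, pi_pos]
  calc |p n - mainTerm N| ≤ √r * exp ((π ^ 2 / 3 - 2 / 3) / r) := hbound
    _ ≤ 1 * (exp (mu N) * (r ^ 6 / 400)) := by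
      rw [hmu]
      gcongr
      · exact sqrt_le_one.2 (by linarith)
      · exact exp_sub_div_le hr0 hr
    _ ≤ 17 / 10 / (12 * (10 / 6 / r ^ 2)) * (99 / 100) * exp (mu N) *
        (1 / (10 * (10 / 6 / r ^ 2) ^ 2)) := by
      have : 0 ≤ r ^ 6 * exp (mu N) := by positivity
      field_simp
      linarith
    _ ≤ mainTerm N * (1 / (10 * N ^ 2)) := by
      have := (mainTerm_pos hN).le
      rw [mainTerm] at this ⊢
      gcongr
      exact ninety_nine_div_le_one_sub_one_div_mu hN

lemma abs_log_sub_log_le {P M ε : ℝ} (hM : 0 < M) (hε : ε ≤ 1 / 6) (h : |P - M| ≤ M * ε) :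
    |log P - log M| ≤ 6 / 5 * ε := by
  have hε0 : 0 ≤ ε := nonneg_of_mul_nonneg_right ((abs_nonneg _).trans h) hM
  obtain ⟨hlower, hupper⟩ := abs_le.1 h
  have hP : 0 < P := by nlinarith
  have hratio : 0 < P / M := by positivity
  have hle : P / M - 1 ≤ ε := by
    rw [sub_le_iff_le_add, div_le_iff₀ hM]
    linarith
  have hinv : (P / M)⁻¹ ≤ 1 + 6 / 5 * ε := by
    rw [inv_div, div_le_iff₀ hP]
    nlinarith
  rw [← log_div hP.ne' hM.ne', abs_le]
  constructor
  · linarith [one_sub_inv_le_log_of_pos hratio]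
  · linarith [log_le_sub_one_of_pos hratio]

lemma mul_pi_div_sqrt_sq (hN : 0 < N) : N * (π / √(6 * N)) ^ 2 = π ^ 2 / 6 := by
  rw [div_pow, sq_sqrt (by positivity)]
  field_simp

lemma abs_log_p_sub_log_mainTerm_le {m : ℕ} (hm : 4998 ≤ m) :
    |log (p m) - log (mainTerm (m - 1 / 24))| ≤ 3 / 25 / (m - 1 / 24) ^ 2 := by
  have hm' : (4998 : ℝ) ≤ m := by exact_mod_cast hm
  have hN : (4997 : ℝ) ≤ m - 1 / 24 := by linarith
  have hr : π / √(6 * (m - 1 / 24)) ≤ 1 / 50 := by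
    rw [div_le_div_iff₀ (by positivity) (by norm_num)]
    exact (le_sqrt_of_sq_le (by nlinarith [pi_lt_d2, pi_pos])).trans_eq (one_mul _).symm
  have hε : 1 / (10 * (m - 1 / 24 : ℝ) ^ 2) ≤ 1 / 6 :=
    one_div_le_one_div_of_le (by norm_num) (by nlinarith)
  refine (abs_log_sub_log_le (mainTerm_pos (by linarith)) hε
    (abs_p_sub_mainTerm_le_mul (by positivity) hr (mul_pi_div_sqrt_sq (by linarith)))).trans_eq ?_
  field_simp
  norm_num

end MainTerm

section SecondDifference

lemma two_sub_le_sqrt_add_sqrt {h : ℝ} (hh : h ^ 2 ≤ 1 / 2) :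
    2 - h ^ 2 / 4 - h ^ 4 / 4 ≤ √(1 + h) + √(1 - h) := by
  obtain ⟨hlower, hupper⟩ := abs_lt.1 ((sq_lt_one_iff_abs_lt_one h).1 (by linarith))
  have hprod : 1 - h ^ 2 / 2 - h ^ 4 / 4 ≤ √(1 + h) * √(1 - h) := by
    rw [← sqrt_mul (by linarith)]
    apply le_sqrt_of_sq_le
    nlinarith [pow_nonneg (sq_nonneg h) 2, pow_nonneg (sq_nonneg h) 3]
  have hsq : (√(1 + h) + √(1 - h)) ^ 2 = 2 + 2 * (√(1 + h) * √(1 - h)) := by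
    rw [add_sq, sq_sqrt (by linarith), sq_sqrt (by linarith)]
    ring
  apply le_of_sq_le_sq _ (by positivity)
  rw [hsq]
  nlinarith [pow_nonneg (sq_nonneg h) 2, pow_nonneg (sq_nonneg h) 3]

lemma one_le_inv_sqrt_mul_inv_sqrt {h : ℝ} (hh : h ^ 2 < 1) :
    1 ≤ (√(1 + h))⁻¹ * (√(1 - h))⁻¹ := by
  have hlower := (abs_lt.1 ((sq_lt_one_iff_abs_lt_one h).1 hh)).1
  rw [← mul_inv, ← sqrt_mul (by linarith)]
  exact (one_le_inv₀ (sqrt_pos.2 (by nlinarith))).2 (sqrt_le_one.2 (by nlinarith))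

lemma inv_sqrt_le_one_add_inv_div_two {x : ℝ} (hx : 0 ≤ x) : (√x)⁻¹ ≤ (1 + x⁻¹) / 2 := by
  rw [← sqrt_inv]
  nlinarith [sq_nonneg (√x⁻¹ - 1), sq_sqrt (inv_nonneg.2 hx)]

lemma inv_sqrt_add_inv_sqrt_le {h : ℝ} (hh : h ^ 2 ≤ 1 / 2) :
    (√(1 + h))⁻¹ + (√(1 - h))⁻¹ ≤ 2 + 2 * h ^ 2 := by
  obtain ⟨hlower, hupper⟩ := abs_lt.1 ((sq_lt_one_iff_abs_lt_one h).1 (by linarith))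
  have hadd : 0 < 1 + h := by linarith
  have hsub : 0 < 1 - h := by linarith
  calc (√(1 + h))⁻¹ + (√(1 - h))⁻¹ ≤ (1 + (1 + h)⁻¹) / 2 + (1 + (1 - h)⁻¹) / 2 :=
        add_le_add (inv_sqrt_le_one_add_inv_div_two hadd.le)
          (inv_sqrt_le_one_add_inv_div_two hsub.le)
    _ = 1 + 1 / (1 - h ^ 2) := by
      rw [show 1 - h ^ 2 = (1 + h) * (1 - h) by ring]
      field_simp
      ring
    _ ≤ 1 + (1 + 2 * h ^ 2) := by
      gcongr
      rw [div_le_iff₀ (by linarith)]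
      nlinarith [sq_nonneg h]
    _ = 2 + 2 * h ^ 2 := by ring

lemma two_mul_log_one_sub_sub_le {s u v d : ℝ} (hs : 0 ≤ s) (hs' : s ≤ 1 / 100) (hu : 0 < u)
    (hv : 0 < v) (huv : 1 ≤ u * v) (hsum : u + v ≤ 2 + d) (hd : d ≤ 1) :
    2 * log (1 - s) - log (1 - s * u) - log (1 - s * v) ≤ 2 * s * d := by
  have hd0 : 0 ≤ d := by nlinarith [sq_nonneg (u - v)]
  have hsu : 97 / 100 ≤ 1 - s * u := by nlinarith
  have hsv : 97 / 100 ≤ 1 - s * v := by nlinarith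
  have hs1 : 0 < 1 - s := by linarith
  have hden : 1 / 2 ≤ (1 - s * u) * (1 - s * v) := by nlinarith
  have hnum : (1 - s) ^ 2 ≤ (1 - s * u) * (1 - s * v) + s * d := by
    nlinarith [mul_nonneg (mul_nonneg hs hs) (sub_nonneg.2 huv), mul_le_mul_of_nonneg_left hsum hs]
  calc 2 * log (1 - s) - log (1 - s * u) - log (1 - s * v)
      = log ((1 - s) ^ 2 / ((1 - s * u) * (1 - s * v))) := by
        rw [log_div (by positivity) (by positivity), log_pow, log_mul (by linarith) (by linarith)]
        push_cast
        ring
    _ ≤ (1 - s) ^ 2 / ((1 - s * u) * (1 - s * v)) - 1 := log_le_sub_one_of_pos (by positivity)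
    _ ≤ 2 * s * d := by
      rw [sub_le_iff_le_add, div_le_iff₀ (by positivity)]
      linarith [mul_le_mul_of_nonneg_left hden (mul_nonneg hs hd0)]

lemma log_add_one_add_log_sub_one_sub_le {N : ℝ} (hN : 1 < N) :
    log (N + 1) + log (N - 1) - 2 * log N ≤ -(1 / N ^ 2) := by
  have hN1 : 0 < N - 1 := sub_pos.2 hN
  calc log (N + 1) + log (N - 1) - 2 * log N = log ((N + 1) * (N - 1) / N ^ 2) := by
        rw [log_div (by positivity) (by positivity), log_mul (by positivity) hN1.ne', log_pow]
        norm_cast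
    _ ≤ (N + 1) * (N - 1) / N ^ 2 - 1 := log_le_sub_one_of_pos (by positivity)
    _ = -(1 / N ^ 2) := by
      field_simp
      ring

/-- The function `-μ''`, whose value at `n` is the leading term of `-Δ² log p (n - 1)`. -/
noncomputable def muCurvature (N : ℝ) : ℝ := 24 * π / (24 * N) ^ ((3 : ℝ) / 2)

variable {N : ℝ}

lemma muCurvature_eq_mu_div (hN : 0 < N) : muCurvature N = mu N / (4 * N ^ 2) := by
  have hrpow : (24 * N) ^ ((3 : ℝ) / 2) = 24 * N * √(24 * N) := by
    rw [show (3 : ℝ) / 2 = 1 + 1 / 2 by norm_num, rpow_add (by positivity), rpow_one,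
      ← sqrt_eq_rpow]
  have hsqrt : √(2 / 3 * N) * √(24 * N) = 4 * N := by
    rw [← sqrt_mul (by positivity), sqrt_eq_iff_mul_self_eq (by positivity) (by positivity)]
    ring
  rw [muCurvature, hrpow, mu, div_eq_div_iff (by positivity) (by positivity)]
  linear_combination -24 * π * N * hsqrt

lemma mu_mul {t : ℝ} (hN : 0 ≤ N) : mu (N * t) = mu N * √t := by
  rw [mu, mu, ← mul_assoc, sqrt_mul (by positivity), mul_assoc]

lemma two_mul_mu_sub_le (hN : 2 ≤ N) :
    2 * mu N - mu (N + 1) - mu (N - 1) ≤ muCurvature N * (1 + 1 / N ^ 2) := by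
  have hh : (1 / N) ^ 2 ≤ 1 / 2 := by
    have : 1 / N ≤ 1 / 2 := one_div_le_one_div_of_le two_pos hN
    nlinarith [one_div_nonneg.2 (zero_le_two.trans hN)]
  have hadd : N + 1 = N * (1 + 1 / N) := by field_simp
  have hsub : N - 1 = N * (1 - 1 / N) := by field_simp
  have hmu : 0 ≤ mu N := by
    rw [mu]
    positivity
  calc 2 * mu N - mu (N + 1) - mu (N - 1)
      = mu N * (2 - (√(1 + 1 / N) + √(1 - 1 / N))) := by
        rw [hadd, hsub, mu_mul (by positivity), mu_mul (by positivity)]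
        ring
    _ ≤ mu N * ((1 / N) ^ 2 / 4 + (1 / N) ^ 4 / 4) := by
      gcongr
      linarith [two_sub_le_sqrt_add_sqrt hh]
    _ = muCurvature N * (1 + 1 / N ^ 2) := by
      rw [muCurvature_eq_mu_div (by positivity)]
      field_simp

lemma two_mul_log_one_sub_one_div_mu_sub_le (hN : 4900 ≤ N) :
    2 * log (1 - 1 / mu N) - log (1 - 1 / mu (N + 1)) - log (1 - 1 / mu (N - 1)) ≤
      1 / 25 * (1 / N ^ 2) := by
  have hh : (1 / N) ^ 2 ≤ 1 / 4 := by
    have : 1 / N ≤ 1 / 2 := one_div_le_one_div_of_le two_pos (by linarith)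
    nlinarith [one_div_pos.2 (by positivity : 0 < N)]
  have hadd : N + 1 = N * (1 + 1 / N) := by field_simp
  have hsub : N - 1 = N * (1 - 1 / N) := by field_simp
  have hmu0 : 0 ≤ 1 / mu N := by
    rw [mu]
    positivity
  have hmu := ninety_nine_div_le_one_sub_one_div_mu (N := N) (by linarith)
  have hN1 : 0 < 1 - 1 / N := pos_of_mul_pos_right (by linarith) (by positivity : 0 ≤ N)
  rw [hadd, hsub, mu_mul (by positivity), mu_mul (by positivity), div_mul_eq_div_div 1 (mu N),
    div_mul_eq_div_div 1 (mu N), div_eq_mul_inv (1 / mu N), div_eq_mul_inv (1 / mu N)]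
  calc _ ≤ 2 * (1 / mu N) * (2 * (1 / N) ^ 2) :=
        two_mul_log_one_sub_sub_le hmu0 (by linarith) (by positivity)
          (inv_pos.2 (sqrt_pos.2 hN1)) (one_le_inv_sqrt_mul_inv_sqrt (by linarith))
          (inv_sqrt_add_inv_sqrt_le (by linarith)) (by linarith)
    _ ≤ 2 * (1 / 100) * (2 * (1 / N) ^ 2) :=
      mul_le_mul_of_nonneg_right (by linarith) (by positivity)
    _ = 1 / 25 * (1 / N ^ 2) := by ring

lemma neg_second_difference_log_mainTerm_le (hN : 4900 ≤ N) :
    2 * log (mainTerm N) - log (mainTerm (N + 1)) - log (mainTerm (N - 1)) ≤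
      muCurvature N * (1 + 1 / N ^ 2) - 24 / 25 * (1 / N ^ 2) := by
  rw [log_mainTerm (by linarith), log_mainTerm (by linarith), log_mainTerm (by linarith)]
  linarith [two_mul_mu_sub_le (N := N) (by linarith), two_mul_log_one_sub_one_div_mu_sub_le hN,
    log_add_one_add_log_sub_one_sub_le (N := N) (by linarith)]

lemma neg_second_difference_log_p_le {n : ℕ} (hn : 5000 ≤ n) (hN : N = n - 25 / 24) :
    -(log (p n) + log (p (n - 2)) - 2 * log (p (n - 1))) ≤
      muCurvature N * (1 + 1 / N ^ 2) - 9 / 20 * (1 / N ^ 2) := by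
  have hn' : (5000 : ℝ) ≤ n := by exact_mod_cast hn
  have hN0 : 0 < N := by linarith
  have hprev : N = (n - 1 : ℕ) - 1 / 24 := by
    rw [hN, Nat.cast_sub (by lia)]
    ring
  have hprev' : N - 1 = (n - 2 : ℕ) - 1 / 24 := by
    rw [hN, Nat.cast_sub (by lia)]
    ring
  have hcur : N + 1 = n - 1 / 24 := by linarith
  have h0 := abs_log_p_sub_log_mainTerm_le (m := n) (by lia)
  have h1 := abs_log_p_sub_log_mainTerm_le (m := n - 1) (by lia)
  have h2 := abs_log_p_sub_log_mainTerm_le (m := n - 2) (by lia)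
  rw [← hcur] at h0
  rw [← hprev] at h1
  rw [← hprev'] at h2
  have hadd : 3 / 25 / (N + 1) ^ 2 ≤ 3 / 25 * (1 / N ^ 2) := by
    rw [mul_one_div]
    gcongr
    linarith
  have hsub : 3 / 25 / (N - 1) ^ 2 ≤ 1 / 8 * (1 / N ^ 2) := by
    rw [mul_one_div, div_le_div_iff₀ (pow_pos (by linarith) 2) (pow_pos (by linarith) 2)]
    nlinarith
  rw [← mul_one_div] at h1
  linarith [neg_second_difference_log_mainTerm_le (N := N) (by linarith), abs_le.1 h0, abs_le.1 h1,
    abs_le.1 h2]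

lemma one_sub_mul_le_one_add_rpow_neg {t s : ℝ} (ht : -1 < t) (hs : 0 ≤ s) :
    1 - s * t ≤ (1 + t) ^ (-s) := by
  calc 1 - s * t ≤ exp (t * -s) := by linarith [add_one_le_exp (t * -s)]
    _ = exp t ^ (-s) := exp_mul t (-s)
    _ ≤ (1 + t) ^ (-s) :=
      rpow_le_rpow_of_nonpos (by linarith) (by linarith [add_one_le_exp t]) (by linarith)

lemma muCurvature_mul_one_sub_le {a : ℝ} (hN : 0 < N) (ha : 0 ≤ a) :
    muCurvature N * (1 - 3 / 2 * (a / N)) ≤ muCurvature (N + a) := by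
  have hadd : 24 * (N + a) = 24 * N * (1 + a / N) := by field_simp
  have ht : 0 ≤ a / N := by positivity
  rw [muCurvature, muCurvature, hadd, mul_rpow (x := 24 * N) (by positivity) (by positivity),
    ← div_div, div_eq_mul_inv _ ((1 + a / N) ^ _), ← rpow_neg (by positivity)]
  gcongr
  exact one_sub_mul_le_one_add_rpow_neg (by linarith) (by norm_num)

lemma muCurvature_le (hN : 4900 ≤ N) : muCurvature N ≤ 1 / 100 * (1 / N) := by
  have hmu : mu N ≤ N / 25 := by
    apply le_of_sq_le_sq _ (by positivity)
    have hpi : π ^ 2 ≤ 10 := by nlinarith [pi_lt_d2, pi_pos]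
    rw [mu, mul_pow, sq_sqrt (by positivity)]
    nlinarith
  rw [muCurvature_eq_mu_div (by positivity)]
  calc mu N / (4 * N ^ 2) ≤ N / 25 / (4 * N ^ 2) := by gcongr
    _ = 1 / 100 * (1 / N) := by
      field_simp
      norm_num

lemma muCurvature_sub_lt_muCurvature_sub_sq (hN : 4900 ≤ N) :
    muCurvature N * (1 + 1 / N ^ 2) - 9 / 20 * (1 / N ^ 2) <
      muCurvature (N + 25 / 24) - muCurvature (N + 25 / 24) ^ 2 := by
  have hN0 : 0 < N := by linarith
  have hle := muCurvature_le hN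
  have hlower := muCurvature_mul_one_sub_le hN0 (by norm_num : (0 : ℝ) ≤ 25 / 24)
  have hmono : muCurvature (N + 25 / 24) ≤ muCurvature N := by
    rw [muCurvature, muCurvature]
    gcongr
    linarith
  have hpos : 0 ≤ muCurvature (N + 25 / 24) := by
    rw [muCurvature]
    positivity
  have hh0 : 0 < 1 / N := by positivity
  have hh : 1 / N ≤ 1 / 4900 := one_div_le_one_div_of_le (by norm_num) hN
  have hsq : muCurvature (N + 25 / 24) ^ 2 ≤ (1 / 100 * (1 / N)) ^ 2 := by
    gcongr
    exact hmono.trans hle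
  have hcub : muCurvature N * (1 / N ^ 2) ≤ 1 / 100 * (1 / N) * (1 / N ^ 2) := by gcongr
  have hquad : muCurvature N * (1 / N) ≤ 1 / 100 * (1 / N) * (1 / N) := by gcongr
  have hN2 : 1 / N ^ 2 = (1 / N) ^ 2 := (one_div_pow N 2).symm
  have h25 : 25 / 24 / N = 25 / 24 * (1 / N) := (mul_one_div _ _).symm
  rw [hN2] at hcub ⊢
  rw [h25] at hlower
  nlinarith [pow_pos hh0 2]

end SecondDifference

theorem upper_bound_neg_second_difference (n : ℕ) (hn : 5000 ≤ n) :
    -(Real.log (p n) + Real.log (p (n - 2)) - 2 * Real.log (p (n - 1))) <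
      24 * π / (24 * (n : ℝ)) ^ ((3 : ℝ) / 2) -
        (24 * π / (24 * (n : ℝ)) ^ ((3 : ℝ) / 2)) ^ 2 := by
  have hn' : (5000 : ℝ) ≤ n := by exact_mod_cast hn
  calc _ ≤ _ := neg_second_difference_log_p_le hn rfl
    _ < muCurvature (n - 25 / 24 + 25 / 24) - muCurvature (n - 25 / 24 + 25 / 24) ^ 2 :=
      muCurvature_sub_lt_muCurvature_sub_sq (by linarith)
    _ = _ := by rw [sub_add_cancel, muCurvature]
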